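/- Let f be a homeomorphism of the open annulus 𝔸 isotopic to the identity and satisfying the intersection property, and let F be a lift of f to ℝ². Suppose Rot_weak(F) ⊂ [−q+2, q−2] for some integer q ≥ 2. Then there exists an oriented essential line γ in 𝔸 joining S to N that lifts to an essential line Γ in ℝ² satisfying T^{−q}(Γ) < F(Γ) < T^{q}(Γ). -/

import Mathlib

open Filter Topology Set

noncomputable section

/-- The plane ℝ². -/
abbrev Plane := ℝ × ℝ

/-- The open annulus 𝔸 = ℝ/ℤ × ℝ. -/
abbrev Ann := AddCircle (1 : ℝ) × ℝ

/-- The covering map π : ℝ² → 𝔸, (x,y) ↦ (x + ℤ, y). -/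
def prj : Plane → Ann := fun p => ((p.1 : AddCircle (1 : ℝ)), p.2)

/-- The deck transformation T^k : ℝ² → ℝ², (x,y) ↦ (x + k, y). -/
def Tr (k : ℤ) : Plane → Plane := fun p => (p.1 + (k : ℝ), p.2)

/-- `F` is a lift of `f` to the universal cover ℝ² of the annulus. -/
def IsLift (f : Ann ≃ₜ Ann) (F : Plane ≃ₜ Plane) : Prop :=
  ∀ p : Plane, prj (F p) = f (prj p)

/-- `f` is isotopic to the identity: there is a continuous family of homeomorphisms
joining the identity to `f`. -/
def IsotopicToId (f : Ann ≃ₜ Ann) : Prop :=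
  ∃ H : ℝ → Ann → Ann,
    Continuous (fun q : ℝ × Ann => H q.1 q.2) ∧
    (∀ t : ℝ, ∃ h : Ann ≃ₜ Ann, ∀ z, H t z = h z) ∧
    (∀ z, H 0 z = z) ∧ (∀ z, H 1 z = f z)

/-- An essential circle in 𝔸: a simple closed curve which is not null-homotopic. -/
def IsEssentialCircle (c : Set Ann) : Prop :=
  ∃ φ : C(AddCircle (1 : ℝ), Ann), Function.Injective φ ∧ Set.range φ = c ∧
    ¬ ∃ pt : Ann, φ.Homotopic (ContinuousMap.const _ pt)

/-- `f` has the intersection property: every essential circle meets its image. -/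
def IntersectionProperty (f : Ann → Ann) : Prop :=
  ∀ c : Set Ann, IsEssentialCircle c → (c ∩ f '' c).Nonempty

/-- `z` is a positively recurrent point of `g`: some subsequence of the forward orbit
of `z` converges to `z`. -/
def PosRec {X : Type*} [TopologicalSpace X] (g : X → X) (z : X) : Prop :=
  ∃ φ : ℕ → ℕ, StrictMono φ ∧ Tendsto (fun k => g^[φ k] z) atTop (𝓝 z)

/-- The positively recurrent point `z` has rotation number `ρ` for the lift `F` of `f`. -/
def HasRotNum (f : Ann → Ann) (F : Plane → Plane) (z : Ann) (ρ : ℝ) : Prop :=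
  PosRec f z ∧
    ∀ zt : Plane, prj zt = z →
      ∀ φ : ℕ → ℕ, StrictMono φ →
        Tendsto (fun k => f^[φ k] z) atTop (𝓝 z) →
        Tendsto (fun k => ((F^[φ k] zt).1 - zt.1) / (φ k : ℝ)) atTop (𝓝 ρ)

/-- The rotation set Rot(F): the set of rotation numbers of positively recurrent
points of `f`. -/
def Rot (f : Ann → Ann) (F : Plane → Plane) : Set ℝ := {ρ | ∃ z, HasRotNum f F z ρ}

/-- The region `L(Γ)` of the plane on the left (west) of a line `Γ` (as a subset of ℝ²):
points lying in the connected component of the complement of `Γ` containing all far-west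
points of the horizontal axis. -/
def Lset (Γ : Set Plane) : Set Plane :=
  {p | ∃ s : ℝ, ∀ x ≤ s, p ∈ connectedComponentIn Γᶜ ((x, 0) : Plane)}

/-- The region `R(Γ)` of the plane on the right (east) of a line `Γ`. -/
def Rset (Γ : Set Plane) : Set Plane :=
  {p | ∃ s : ℝ, ∀ x ≥ s, p ∈ connectedComponentIn Γᶜ ((x, 0) : Plane)}

/-- The relation `Γ₁ < Γ₂` on (essential, oriented from south to north) lines:
`Cl(L(Γ₁)) ⊆ L(Γ₂)`. -/
def lineLT (Γ₁ Γ₂ : Set Plane) : Prop := closure (Lset Γ₁) ⊆ Lset Γ₂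

/-- An essential line in ℝ², oriented from south to north: a properly embedded copy of ℝ
whose second coordinate tends to ±∞ at ±∞. -/
def IsEssLinePlane (Γ : ℝ → Plane) : Prop :=
  Continuous Γ ∧ Function.Injective Γ ∧ IsProperMap Γ ∧
    Tendsto (fun t => (Γ t).2) atTop atTop ∧ Tendsto (fun t => (Γ t).2) atBot atBot

/-- An essential line in the annulus 𝔸: a properly embedded simple path joining one end
to the other. -/
def IsEssLineAnn (γ : ℝ → Ann) : Prop :=
  Continuous γ ∧ Function.Injective γ ∧ IsProperMap γ ∧
    ((Tendsto (fun t => (γ t).2) atTop atTop ∧ Tendsto (fun t => (γ t).2) atBot atBot) ∨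
     (Tendsto (fun t => (γ t).2) atTop atBot ∧ Tendsto (fun t => (γ t).2) atBot atTop))

/-- An oriented essential line in 𝔸 joining the lower end S to the upper end N. -/
def IsEssLineAnnSN (γ : ℝ → Ann) : Prop :=
  Continuous γ ∧ Function.Injective γ ∧ IsProperMap γ ∧
    Tendsto (fun t => (γ t).2) atTop atTop ∧ Tendsto (fun t => (γ t).2) atBot atBot

/-- The weak rotation set of `F` relative to a compact set `K` of the annulus,
as a subset of [-∞,+∞]. -/
def RotWeakK (F : Plane → Plane) (K : Set Ann) : Set EReal :=
  {r | ∃ zs : ℕ → Plane, ∃ ns : ℕ → ℕ,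
      (∀ k, prj (zs k) ∈ K) ∧ (∀ k, prj (F^[ns k] (zs k)) ∈ K) ∧
      (∀ k, 0 < ns k) ∧ Tendsto ns atTop atTop ∧
      Tendsto (fun k => ((((F^[ns k] (zs k)).1 - (zs k).1) / (ns k : ℝ) : ℝ) : EReal))
        atTop (𝓝 r)}

/-- The weak rotation set of `F`: union of the `RotWeakK F K` over all compact `K ⊆ 𝔸`. -/
def RotWeak (F : Plane → Plane) : Set EReal :=
  ⋃ K ∈ {K : Set Ann | IsCompact K}, RotWeakK F K

/-- A continuous real function avoiding the zeros of a `π`-antiperiodic function has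
oscillation less than `π`. -/
lemma aux_lt_add_pi (g : ℝ → ℝ) (hg : ∀ x, g (x + Real.pi) = - g x) (φ : ℝ → ℝ)
    (hφ : Continuous φ) (h : (∀ x, 0 < g (φ x)) ∨ (∀ x, g (φ x) < 0)) (x y : ℝ) :
    φ y < φ x + Real.pi := by
  by_contra hc
  push Not at hc
  have : φ x + Real.pi ∈ range φ :=
    mem_range_of_exists_le_of_exists_ge hφ ⟨x, by linarith [Real.pi_pos]⟩ ⟨y, hc⟩
  obtain ⟨z, hz⟩ := this
  have h2 := hg (φ x)
  rw [← hz] at h2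
  rcases h with h | h
  · linarith [h x, h z]
  · linarith [h x, h z]

lemma poincare_miranda (D : ℝ × ℝ → ℂ) (hD : Continuous D) (h0 : ∀ p, D p ≠ 0)
    (hl : ∀ t, (D (0, t)).re < 0) (hr : ∀ t, 0 < (D (1, t)).re)
    (hb : ∀ s, 0 < (D (s, 0)).im) (ht : ∀ s, (D (s, 1)).im < 0) : False := by
  obtain ⟨L, ⟨-, hL⟩, -⟩ := Complex.isCoveringMapOn_exp.existsUnique_continuousMap_lifts
    (⟨D, hD⟩ : C(ℝ × ℝ, ℂ)) (a₀ := (0, 0)) (e₀ := Complex.log (D (0, 0)))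
    (by simpa using Complex.exp_log (h0 _)) (by simpa using h0)
  have hL' : ∀ p, Complex.exp (L p) = D p := fun p => congrFun hL p
  have hre : ∀ p, (D p).re = Real.exp (L p).re * Real.cos (L p).im := fun p => by
    rw [← hL', Complex.exp_re]
  have him : ∀ p, (D p).im = Real.exp (L p).re * Real.sin (L p).im := fun p => by
    rw [← hL', Complex.exp_im]
  have hl' : ∀ t, Real.cos (L (0, t)).im < 0 := fun t => by
    have := hl t; rw [hre] at this
    exact (pos_iff_neg_of_mul_neg this).1 (Real.exp_pos _)
  have hr' : ∀ t, 0 < Real.cos (L (1, t)).im := fun t => by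
    have := hr t; rw [hre] at this
    exact (pos_iff_pos_of_mul_pos this).1 (Real.exp_pos _)
  have hb' : ∀ t, 0 < Real.sin (L (t, 0)).im := fun t => by
    have := hb t; rw [him] at this
    exact (pos_iff_pos_of_mul_pos this).1 (Real.exp_pos _)
  have ht' : ∀ t, Real.sin (L (t, 1)).im < 0 := fun t => by
    have := ht t; rw [him] at this
    exact (pos_iff_neg_of_mul_neg this).1 (Real.exp_pos _)
  have c1 := aux_lt_add_pi Real.sin Real.sin_add_pi (fun s => (L (s, 0)).im) (by fun_prop)
    (Or.inl hb') 0 1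
  have c2 := aux_lt_add_pi Real.cos Real.cos_add_pi (fun s => (L (1, s)).im) (by fun_prop)
    (Or.inl hr') 0 1
  have c3 := aux_lt_add_pi Real.sin Real.sin_add_pi (fun s => (L (s, 1)).im) (by fun_prop)
    (Or.inr ht') 1 0
  have c4 := aux_lt_add_pi Real.cos Real.cos_add_pi (fun s => (L (0, s)).im) (by fun_prop)
    (Or.inr hl') 1 0
  obtain ⟨k, hk1, hk2⟩ : ∃ k : ℤ, 0 ≤ (L (0, 0)).im - k * (2 * Real.pi) ∧
      (L (0, 0)).im - k * (2 * Real.pi) < 2 * Real.pi := by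
    refine ⟨⌊(L (0,0)).im / (2 * Real.pi)⌋, ?_, ?_⟩
    · have := Int.floor_le ((L (0,0)).im / (2 * Real.pi))
      rw [le_div_iff₀ (by positivity)] at this
      linarith
    · have := Int.lt_floor_add_one ((L (0,0)).im / (2 * Real.pi))
      rw [div_lt_iff₀ (by positivity)] at this
      linarith
  have hs : ∀ x : ℝ, Real.sin (x - k * (2 * Real.pi)) = Real.sin x := fun x =>
    Real.sin_sub_int_mul_two_pi x k
  have hc : ∀ x : ℝ, Real.cos (x - k * (2 * Real.pi)) = Real.cos x := fun x =>
    Real.cos_sub_int_mul_two_pi x k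
  have e1 := hb' 0
  have e2 := hl' 0
  have e3 := hb' 1
  have e4 := hr' 0
  have e5 := hr' 1
  have e6 := ht' 1
  have e7 := hl' 1
  have e8 := ht' 0
  rw [← hs] at e1 e3 e6 e8
  rw [← hc] at e2 e4 e5 e7
  have sp : ∀ x, Real.pi ≤ x → x ≤ 2 * Real.pi → Real.sin x ≤ 0 := by
    intro x h1 h2
    have := Real.sin_nonneg_of_nonneg_of_le_pi (x := x - Real.pi) (by linarith) (by linarith)
    rw [Real.sin_sub_pi] at this
    linarith
  generalize (L (0,0)).im = t00 at *
  generalize (L (1,0)).im = t10 at *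
  generalize (L (1,1)).im = t11 at *
  generalize (L (0,1)).im = t01 at *
  generalize hK : (k : ℝ) * (2 * Real.pi) = K at *
  have pp := Real.pi_pos
  have f1 : t00 - K < Real.pi := by
    by_contra h; push Not at h
    linarith [sp _ h (by linarith)]
  have f2 : Real.pi / 2 < t00 - K := by
    by_contra h; push Not at h
    linarith [Real.cos_nonneg_of_neg_pi_div_two_le_of_le (x := t00 - K) (by linarith) h]
  have f3 : t10 - K < Real.pi / 2 := by
    by_contra h; push Not at h
    rcases le_total (t10 - K) (Real.pi + Real.pi / 2) with h2 | h2
    · linarith [Real.cos_nonpos_of_pi_div_two_le_of_le h h2]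
    · linarith [sp _ (by linarith) (by linarith : t10 - K ≤ 2 * Real.pi)]
  have f4 : t11 - K < 0 := by
    by_contra h; push Not at h
    rcases le_total (t11 - K) Real.pi with h2 | h2
    · linarith [Real.sin_nonneg_of_nonneg_of_le_pi h h2]
    · linarith [Real.cos_nonpos_of_pi_div_two_le_of_le (by linarith)
        (by linarith : t11 - K ≤ Real.pi + Real.pi / 2)]
  have f5 : t01 - K < - (Real.pi / 2) := by
    by_contra h; push Not at h
    rcases le_total (t01 - K) (Real.pi / 2) with h2 | h2
    · linarith [Real.cos_nonneg_of_neg_pi_div_two_le_of_le h h2]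
    · linarith [Real.sin_nonneg_of_nonneg_of_le_pi (by linarith)
        (by linarith : t01 - K ≤ Real.pi)]
  linarith

/-- A path from the far west to the far east meets an essential line. -/
lemma line_separates (Γ : ℝ → Plane) (hΓ : Continuous Γ)
    (hN : Tendsto (fun t => (Γ t).2) atTop atTop) (hS : Tendsto (fun t => (Γ t).2) atBot atBot)
    (U : Set Plane) (hU : IsPathConnected U) (hdis : Disjoint U (range Γ))
    (s₀ s₁ : ℝ) (hW : ∀ x ≤ s₀, ((x, 0) : Plane) ∈ U) (hE : ∀ x ≥ s₁, ((x, 0) : Plane) ∈ U) :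
    False := by
  -- a path in U
  obtain ⟨p, hp⟩ := hU.joinedIn _ (hW s₀ le_rfl) _ (hE s₁ le_rfl)
  let P : ℝ → Plane := p.extend
  have hPc : Continuous P := p.continuous_extend
  have hPU : ∀ t, P t ∈ U := by
    intro t
    have : P t ∈ range p := by exact ⟨projIcc (0:ℝ) 1 zero_le_one t, rfl⟩
    obtain ⟨u, hu⟩ := this
    rw [← hu]; exact hp u
  obtain ⟨Y, hY⟩ : ∃ Y, ∀ t, |(P t).2| ≤ Y := by
    have hc : IsCompact (range p) := isCompact_range p.continuous
    obtain ⟨Y, hY⟩ := (hc.image continuous_snd).isBounded.exists_norm_le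
    refine ⟨Y, fun t => hY _ ⟨P t, ?_, rfl⟩⟩
    exact ⟨projIcc (0:ℝ) 1 zero_le_one t, rfl⟩
  have hY0 : 0 ≤ Y := le_trans (abs_nonneg _) (hY 0)
  obtain ⟨t₁, ht₁⟩ := (hN.eventually_gt_atTop Y).exists
  obtain ⟨t₀, ht₀⟩ := (hS.eventually_lt_atBot (-Y)).exists
  -- bounding the line
  let c : ℝ → ℝ := fun t => t₀ + (projIcc (0:ℝ) 1 zero_le_one t : ℝ) * (t₁ - t₀)
  have hcc : Continuous c := by
    have : Continuous (fun t : ℝ => (projIcc (0:ℝ) 1 zero_le_one t : ℝ)) :=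
      continuous_subtype_val.comp continuous_projIcc
    fun_prop
  obtain ⟨X, hX⟩ : ∃ X, ∀ t, |(Γ (c t)).1| ≤ X := by
    let c' : ℝ → ℝ := fun u => (Γ (t₀ + u * (t₁ - t₀))).1
    have hc' : Continuous c' := by fun_prop
    obtain ⟨X, hX⟩ := ((isCompact_Icc (a := (0:ℝ)) (b := 1)).image hc').isBounded.exists_norm_le
    exact ⟨X, fun t => hX _ ⟨_, (projIcc (0:ℝ) 1 zero_le_one t).2, rfl⟩⟩
  -- reparametrised path, extended along the axis
  let B : ℝ → Plane := fun t => P t + (min 0 t + max 0 (t - 1), 0)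
  have hP0 : ∀ t ≤ 0, P t = (s₀, 0) := fun t ht => p.extend_of_le_zero ht
  have hP1 : ∀ t, 1 ≤ t → P t = (s₁, 0) := fun t ht => p.extend_of_one_le ht
  have hBU : ∀ t, B t ∈ U := by
    intro t
    rcases le_total t 0 with h | h
    · have : B t = (s₀ + t, 0) := by
        simp only [B, hP0 t h, min_eq_right h, max_eq_left (by linarith : t - 1 ≤ 0)]
        ext <;> simp
      rw [this]; exact hW _ (by linarith)
    · rcases le_total t 1 with h1 | h1
      · have : B t = P t := by
          simp only [B, min_eq_left h, max_eq_left (by linarith : t - 1 ≤ 0)]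
          ext <;> simp
        rw [this]; exact hPU t
      · have : B t = (s₁ + (t - 1), 0) := by
          simp only [B, hP1 t h1, min_eq_left h, max_eq_right (by linarith : 0 ≤ t - 1)]
          ext <;> simp
        rw [this]; exact hE _ (by linarith)
  have hBc : Continuous B := by fun_prop
  have hB2 : ∀ t, |(B t).2| ≤ Y := fun t => by simpa [B] using hY t
  let m : ℝ := 1 + |X| + |s₀| + |s₁|
  let D : ℝ × ℝ → ℂ := fun q =>
    (((B (-m + q.1 * (2 * m + 1))).1 - (Γ (c q.2)).1 : ℝ) : ℂ) +
    (((B (-m + q.1 * (2 * m + 1))).2 - (Γ (c q.2)).2 : ℝ) : ℂ) * Complex.I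
  have hre : ∀ q, (D q).re = (B (-m + q.1 * (2 * m + 1))).1 - (Γ (c q.2)).1 := fun q => by
    simp [D]
  have him : ∀ q, (D q).im = (B (-m + q.1 * (2 * m + 1))).2 - (Γ (c q.2)).2 := fun q => by
    simp [D]
  have hm : 0 < m := by positivity
  have hX0 := le_abs_self X
  refine poincare_miranda D ?_ ?_ ?_ ?_ ?_ ?_
  · simp only [D]
    apply Continuous.add
    · exact Complex.continuous_ofReal.comp (by fun_prop)
    · exact (Complex.continuous_ofReal.comp (by fun_prop)).mul continuous_const
  · intro q hq
    have h1 := hre q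
    have h2 := him q
    rw [hq] at h1 h2
    have h3 : B (-m + q.1 * (2 * m + 1)) = Γ (c q.2) := by
      ext
      · simp at h1; linarith
      · simp at h2; linarith
    exact Set.disjoint_left.1 hdis (hBU _) (by rw [h3]; exact mem_range_self _)
  · intro t
    rw [hre]
    have h1 := abs_le.1 (hX t)
    have : (B (-m)).1 = s₀ - m := by
      simp only [B, hP0 (-m) (by linarith), min_eq_right (by linarith : -m ≤ 0),
        max_eq_left (by linarith : -m - 1 ≤ 0)]
      simp; ring
    simp only [zero_mul, add_zero, this]
    have := le_abs_self s₀
    have := abs_nonneg s₁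
    simp only [m]; linarith
  · intro t
    rw [hre]
    have h1 := abs_le.1 (hX t)
    have : (B (1 + m)).1 = s₁ + m := by
      simp only [B, hP1 (1 + m) (by linarith), min_eq_left (by linarith : 0 ≤ 1 + m),
        max_eq_right (by linarith : 0 ≤ 1 + m - 1)]
      simp
    rw [show -m + ((1:ℝ), t).1 * (2 * m + 1) = 1 + m by simp; ring, this]
    have := neg_abs_le s₁
    have := abs_nonneg s₀
    simp only [m]; linarith
  · intro s
    rw [him]
    have : c 0 = t₀ := by simp [c]
    simp only [this]
    have := abs_le.1 (hB2 (-m + s * (2 * m + 1)))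
    linarith
  · intro s
    rw [him]
    have : c 1 = t₁ := by simp [c]
    simp only [this]
    have := abs_le.1 (hB2 (-m + s * (2 * m + 1)))
    linarith

lemma int_valued_const {X : Type*} [TopologicalSpace X] [PreconnectedSpace X] (g : X → ℝ)
    (hg : Continuous g) (h : ∀ x, ((g x : ℝ) : AddCircle (1:ℝ)) = 0) (x y : X) : g x = g y := by
  have hz : ∀ x, ∃ n : ℤ, (n : ℝ) = g x := fun x => by
    obtain ⟨n, hn⟩ := (AddCircle.coe_eq_zero_iff (1:ℝ)).1 (h x)
    exact ⟨n, by simpa using hn⟩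
  wlog hxy : g x < g y generalizing x y
  · rcases lt_trichotomy (g x) (g y) with h1 | h1 | h1
    · exact absurd h1 hxy
    · exact h1
    · exact (this y x h1).symm
  obtain ⟨n, hn⟩ := hz x
  obtain ⟨m, hm⟩ := hz y
  have : (n : ℝ) < m := by rw [hn, hm]; exact hxy
  have h1 : n + 1 ≤ m := by exact_mod_cast this
  have h2 : (n : ℝ) + 1 ≤ m := by exact_mod_cast h1
  obtain ⟨z, hz'⟩ := mem_range_of_exists_le_of_exists_ge hg (c := (n : ℝ) + 1 / 2)
    ⟨x, by linarith⟩ ⟨y, by linarith⟩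
  obtain ⟨k, hk⟩ := hz z
  have h3 : (n : ℝ) < k := by linarith
  have h4 : (k : ℝ) < n + 1 := by linarith
  have h5 : n < k := by exact_mod_cast h3
  have h6 : k < n + 1 := by exact_mod_cast h4
  omega

lemma lift_comm (f : Ann ≃ₜ Ann) (F : Plane ≃ₜ Plane) (hiso : IsotopicToId f)
    (hlift : IsLift f F) (x y : ℝ) :
    F (x + 1, y) = ((F (x, y)).1 + 1, (F (x, y)).2) := by
  have hT : ∀ x y : ℝ, prj (x + 1, y) = prj (x, y) := fun x y => by
    simp [prj]
  have hTF : ∀ p : Plane, prj (F (p.1 + 1, p.2)) = prj (F p) := fun p => by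
    rw [hlift, hlift, hT]
  obtain ⟨H, hH, -, hH0, hH1⟩ := hiso
  let c : C(ℝ × ℝ, AddCircle (1:ℝ)) := ⟨fun q => (H q.1 (prj (q.2, 0))).1, by
    have : Continuous (fun q : ℝ × ℝ => ((q.1, prj (q.2, 0)) : ℝ × Ann)) := by
      unfold prj
      refine continuous_fst.prodMk ((continuous_quotient_mk'.comp continuous_snd).prodMk
        continuous_const)
    exact continuous_fst.comp (hH.comp this)⟩
  obtain ⟨G, ⟨hG0, hG⟩, -⟩ := (AddCircle.isCoveringMap_coe (1:ℝ)).existsUnique_continuousMap_lifts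
    c (0, 0) 0 (by simp [c, hH0, prj])
  have hG' : ∀ s x, ((G (s, x) : ℝ) : AddCircle (1:ℝ)) = (H s (prj (x, 0))).1 := fun s x =>
    congrFun hG (s, x)
  have k1 := int_valued_const (fun q : ℝ × ℝ => G (q.1, q.2 + 1) - G (q.1, q.2)) (by fun_prop)
    (fun q => by rw [AddCircle.coe_sub, hG', hG', hT, sub_self])
  have k2 := int_valued_const (fun x : ℝ => G (0, x) - x) (by fun_prop)
    (fun q => by rw [AddCircle.coe_sub, hG', hH0]; simp [prj]) 1 0
  have k3 := int_valued_const (fun x : ℝ => G (1, x) - (F (x, 0)).1) (by fun_prop)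
    (fun q => by
      rw [AddCircle.coe_sub, hG', hH1, ← hlift]; simp [prj]) 1 0
  have k4 := int_valued_const (fun p : ℝ × ℝ => (F (p.1 + 1, p.2)).1 - (F p).1) (by fun_prop)
    (fun p => by
      have := congrArg Prod.fst (hTF p)
      simp only [prj] at this
      rw [AddCircle.coe_sub, this, sub_self]) (x, y) (0, 0)
  have k5 := k1 (1, 0) (0, 0)
  simp only [zero_add] at k2 k3 k4 k5
  have h1 : (F (x + 1, y)).1 = (F (x, y)).1 + 1 := by linarith
  have h2 : (F (x + 1, y)).2 = (F (x, y)).2 := by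
    simpa [prj] using congrArg Prod.snd (hTF (x, y))
  ext
  · exact h1
  · exact h2

lemma comm_int (F : Plane ≃ₜ Plane)
    (hF : ∀ x y, F (x + 1, y) = ((F (x, y)).1 + 1, (F (x, y)).2)) (n : ℤ) (x y : ℝ) :
    F (x + n, y) = ((F (x, y)).1 + n, (F (x, y)).2) := by
  induction n using Int.induction_on with
  | zero => simp
  | succ i ih =>
    have := hF (x + i) y
    push_cast at ih ⊢
    rw [← add_assoc, this, ih]
    ext <;> simp
    ring
  | pred i ih =>
    have := hF (x + ((-i - 1 : ℤ) : ℝ)) y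
    push_cast at ih this ⊢
    rw [show x + (-(i:ℝ) - 1) + 1 = x + -i by ring, ih] at this
    have h1 := congrArg Prod.fst this
    have h2 := congrArg Prod.snd this
    simp only at h1 h2
    ext
    · simp only; linarith
    · simp only; exact h2.symm

lemma comm_symm (F : Plane ≃ₜ Plane)
    (hF : ∀ x y, F (x + 1, y) = ((F (x, y)).1 + 1, (F (x, y)).2)) (x y : ℝ) :
    F.symm (x + 1, y) = ((F.symm (x, y)).1 + 1, (F.symm (x, y)).2) := by
  apply F.injective
  rw [hF]
  simp

/-- `G` commutes with the unit horizontal translation. -/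
def CommT (G : Plane ≃ₜ Plane) : Prop :=
  ∀ x y, G (x + 1, y) = ((G (x, y)).1 + 1, (G (x, y)).2)

lemma CommT.symm {G : Plane ≃ₜ Plane} (h : CommT G) : CommT G.symm := comm_symm G h

lemma CommT.npow {G : Plane ≃ₜ Plane} (h : CommT G) (n : ℕ) : CommT (G ^ n) := by
  induction n with
  | zero => intro x y; rfl
  | succ n ih =>
    intro x y
    rw [pow_succ']
    change G ((G ^ n) (x + 1, y)) = ((G ((G ^ n) (x, y))).1 + 1, (G ((G ^ n) (x, y))).2)
    rw [ih x y, h]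

lemma CommT.zpow {G : Plane ≃ₜ Plane} (h : CommT G) (n : ℤ) : CommT (G ^ n) := by
  obtain ⟨n, rfl | rfl⟩ := n.eq_nat_or_neg
  · rw [zpow_natCast]; exact h.npow n
  · rw [zpow_neg, zpow_natCast]; exact (h.npow n).symm

lemma npow_eq_iterate (G : Plane ≃ₜ Plane) (n : ℕ) (z : Plane) : (G ^ n) z = G^[n] z := by
  induction n generalizing z with
  | zero => rfl
  | succ n ih => rw [pow_succ, Function.iterate_succ_apply, ← ih]; rfl

/-- A continuous function of the plane which is 1-periodic is bounded on horizontal strips. -/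
lemma periodic_bound (k : Plane → ℝ) (hk : Continuous k) (hp : ∀ x y, k (x + 1, y) = k (x, y))
    (m : ℝ) : ∃ B, ∀ z : Plane, |z.2| ≤ m → |k z| ≤ B := by
  have hn : ∀ (n : ℤ) x y, k (x + n, y) = k (x, y) := fun n x y => by
    have : Function.Periodic (fun x => k (x, y)) 1 := fun x => hp x y
    simpa using this.int_mul n x
  obtain ⟨B, hB⟩ := (((isCompact_Icc (a := (0:ℝ)) (b := 1)).prod
    (isCompact_Icc (a := -m) (b := m))).image hk).isBounded.exists_norm_le
  refine ⟨B, fun z hz => ?_⟩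
  have h1 := hn ⌊z.1⌋ (Int.fract z.1) z.2
  rw [Int.fract_add_floor] at h1
  have h2 := hB (k (Int.fract z.1, z.2)) ⟨(Int.fract z.1, z.2), ⟨⟨Int.fract_nonneg _, (Int.fract_lt_one _).le⟩,
    abs_le.1 hz⟩, rfl⟩
  rw [← h1] at h2
  exact h2

lemma CommT.bound {G : Plane ≃ₜ Plane} (h : CommT G) (m : ℝ) :
    ∃ B, ∀ z : Plane, |z.2| ≤ m → |(G z).1 - z.1| ≤ B :=
  periodic_bound (fun z => (G z).1 - z.1) (by fun_prop) (fun x y => by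
    simp only [h x y]; ring) m

lemma rot_bound_nat (F : Plane ≃ₜ Plane) (hF : CommT F) (q : ℕ)
    (hsub : RotWeak ⇑F ⊆ Set.Icc (((-(q : ℝ) + 2 : ℝ)) : EReal) ((((q : ℝ) - 2 : ℝ)) : EReal))
    (m : ℝ) : ∃ C, ∀ n : ℕ, ∀ z : Plane, |z.2| ≤ m → |((F ^ n) z).2| ≤ m →
      |((F ^ n) z).1 - z.1| ≤ ((q : ℝ) - 3 / 2) * n + C := by
  by_contra hcon
  push Not at hcon
  choose B hB using fun n : ℕ => (hF.npow n).bound m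
  let B' : ℕ → ℝ := fun k => ∑ n ∈ Finset.range (k + 1), |B n| + 2 * k
  have hex := fun k : ℕ => hcon (B' k)
  choose ns zs h1 h2 h3 using hex
  have hns : ∀ k, k < ns k := by
    intro k
    by_contra hk
    push Not at hk
    have e1 := h3 k
    have e2 := hB (ns k) (zs k) (h1 k)
    have e3 : |B (ns k)| ≤ ∑ n ∈ Finset.range (k + 1), |B n| :=
      Finset.single_le_sum (f := fun n => |B n|) (fun i _ => abs_nonneg _)
        (Finset.mem_range.2 (by omega))
    have e4 := le_abs_self (B (ns k))
    have e5 : (0:ℝ) ≤ (q:ℝ) := Nat.cast_nonneg q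
    have e6 : ((ns k : ℕ) : ℝ) ≤ k := by exact_mod_cast hk
    have e7 : (0:ℝ) ≤ (ns k : ℝ) := Nat.cast_nonneg _
    have e8 : 0 ≤ (q:ℝ) * (ns k : ℝ) := by positivity
    simp only [B'] at e1
    linarith
  have hnt : Tendsto ns atTop atTop :=
    tendsto_atTop_mono (fun k => (hns k).le) tendsto_id
  let r : ℕ → ℝ := fun k => ((F^[ns k] (zs k)).1 - (zs k).1) / (ns k : ℝ)
  have hr : ∀ k, (q:ℝ) - 3 / 2 ≤ |r k| := by
    intro k
    have e1 := h3 k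
    rw [npow_eq_iterate] at e1
    have e0 : (0:ℝ) < ns k := by exact_mod_cast (Nat.zero_le k).trans_lt (hns k)
    simp only [r]
    rw [abs_div, abs_of_pos e0, le_div_iff₀ e0]
    have : 0 ≤ B' k := by positivity
    linarith
  have hmem : ∀ k, ((r k : ℝ) : EReal) ∈ (Iic (((-((q:ℝ) - 3 / 2) : ℝ)) : EReal) ∪
      Ici ((((q:ℝ) - 3 / 2 : ℝ)) : EReal)) := by
    intro k
    rcases le_abs.1 (hr k) with h | h
    · right; exact EReal.coe_le_coe_iff.2 h
    · left; exact EReal.coe_le_coe_iff.2 (by linarith)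
  obtain ⟨a, ha, φ, hφ, hlim⟩ := (isClosed_Iic.union isClosed_Ici).isCompact.tendsto_subseq hmem
  have hK : IsCompact ((univ : Set (AddCircle (1:ℝ))) ×ˢ Icc (-m) m) :=
    isCompact_univ.prod isCompact_Icc
  have : a ∈ RotWeak ⇑F := by
    refine mem_iUnion₂.2 ⟨_, hK, zs ∘ φ, ns ∘ φ, ?_, ?_, ?_, hnt.comp hφ.tendsto_atTop, hlim⟩
    · intro k; exact ⟨mem_univ _, abs_le.1 (h1 _)⟩
    · intro k; refine ⟨mem_univ _, abs_le.1 ?_⟩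
      have := h2 (φ k)
      rw [npow_eq_iterate] at this
      exact this
    · intro k; exact (Nat.zero_le _).trans_lt (hns _)
  have hq2 := hsub this
  rcases ha with ha | ha
  · have := EReal.coe_le_coe_iff.1 (hq2.1.trans ha)
    linarith
  · have := EReal.coe_le_coe_iff.1 (le_trans ha hq2.2)
    linarith

lemma rot_bound (F : Plane ≃ₜ Plane) (hF : CommT F) (q : ℕ)
    (hsub : RotWeak ⇑F ⊆ Set.Icc (((-(q : ℝ) + 2 : ℝ)) : EReal) ((((q : ℝ) - 2 : ℝ)) : EReal))
    (m : ℝ) : ∃ C, ∀ n : ℤ, ∀ z : Plane, |z.2| ≤ m → |((F ^ n) z).2| ≤ m →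
      |((F ^ n) z).1 - z.1| ≤ ((q : ℝ) - 3 / 2) * |(n : ℝ)| + C := by
  obtain ⟨C, hC⟩ := rot_bound_nat F hF q hsub m
  refine ⟨C, fun n z h1 h2 => ?_⟩
  obtain ⟨n, rfl | rfl⟩ := n.eq_nat_or_neg
  · simpa using hC n z h1 (by simpa using h2)
  · have e : (F ^ n) ((F ^ (-(n:ℤ))) z) = z := by
      rw [zpow_neg, zpow_natCast]
      exact (F ^ n).apply_symm_apply z
    have := hC n ((F ^ (-(n:ℤ))) z) h2 (by rw [e]; exact h1)
    rw [e] at this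
    rw [abs_sub_comm]
    simpa using this

lemma continuous_majorant (C : ℕ → ℝ) (hC : Monotone C) :
    ∃ w : ℝ → ℝ, Continuous w ∧ ∀ y, C ⌈|y|⌉₊ ≤ w y := by
  obtain ⟨g, hg⟩ := exists_continuous_forall_mem_convex_of_local_const
    (t := fun y : ℝ => Ici (C ⌈|y|⌉₊)) (fun y => convex_Ici _) (fun y₀ => by
      refine ⟨C ⌈|y₀| + 1⌉₊, ?_⟩
      have : ∀ᶠ y in 𝓝 y₀, |y| < |y₀| + 1 :=
        (continuous_abs.tendsto y₀).eventually_lt_const (by linarith)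
      filter_upwards [this] with y hy
      exact hC (Nat.ceil_mono hy.le))
  exact ⟨g, g.continuous, hg⟩

lemma exists_h (F : Plane ≃ₜ Plane) (hF : CommT F) (q : ℕ) (hq : (1:ℝ) ≤ q)
    (hsub : RotWeak ⇑F ⊆ Set.Icc (((-(q : ℝ) + 2 : ℝ)) : EReal) ((((q : ℝ) - 2 : ℝ)) : EReal)) :
    ∃ h : Plane → ℝ, Continuous h ∧ (∀ x y, h (x + 1, y) = h (x, y) + 1) ∧
      ∀ p, |h (F p) - h p| ≤ (q : ℝ) - 1 := by
  choose C₀ hC₀ using fun m : ℕ => rot_bound F hF q hsub m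
  let C : ℕ → ℝ := fun m => ∑ i ∈ Finset.range (m + 1), |C₀ i|
  have hCmono : Monotone C := by
    intro a b hab
    exact Finset.sum_le_sum_of_subset_of_nonneg
      (Finset.range_mono (by omega)) (fun _ _ _ => abs_nonneg _)
  have hC : ∀ m : ℕ, ∀ n : ℤ, ∀ z : Plane, |z.2| ≤ m → |((F ^ n) z).2| ≤ m →
      |((F ^ n) z).1 - z.1| ≤ ((q : ℝ) - 3 / 2) * |(n : ℝ)| + C m := by
    intro m n z h1 h2
    refine (hC₀ m n z h1 h2).trans ?_
    have : |C₀ m| ≤ C m := Finset.single_le_sum (f := fun n => |C₀ n|)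
      (fun i _ => abs_nonneg _) (Finset.mem_range.2 (by omega))
    linarith [le_abs_self (C₀ m)]
  have hC0 : ∀ m, 0 ≤ C m := fun m => Finset.sum_nonneg (fun _ _ => abs_nonneg _)
  obtain ⟨w, hwc, hw⟩ := continuous_majorant C hCmono
  let T : ℤ → Plane → ℝ := fun n z =>
    ((F ^ n) z).1 - w ((F ^ n) z).2 - ((q : ℝ) - 1) * |(n : ℝ)|
  have hTc : ∀ n, Continuous (T n) := fun n => by
    simp only [T]; fun_prop
  -- key upper bound
  have hT : ∀ n z, T n z ≤ z.1 + C ⌈|z.2|⌉₊ - (1 / 2) * |(n : ℝ)| := by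
    intro n z
    have hw' := hw ((F ^ n) z).2
    have a1 := Nat.le_ceil |z.2|
    have a2 := Nat.le_ceil |((F ^ n) z).2|
    have a3 := hC0 ⌈|z.2|⌉₊
    have a4 := hC0 ⌈|((F ^ n) z).2|⌉₊
    simp only [T]
    rcases le_total ⌈|z.2|⌉₊ ⌈|((F ^ n) z).2|⌉₊ with hle | hle
    · have hle' : ((⌈|z.2|⌉₊ : ℕ) : ℝ) ≤ (⌈|((F ^ n) z).2|⌉₊ : ℕ) := by exact_mod_cast hle
      have := (abs_le.1 (hC _ n z (a1.trans hle') a2)).2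
      linarith
    · have hle' : ((⌈|((F ^ n) z).2|⌉₊ : ℕ) : ℝ) ≤ (⌈|z.2|⌉₊ : ℕ) := by exact_mod_cast hle
      have := (abs_le.1 (hC _ n z a1 (a2.trans hle'))).2
      linarith
  have hbdd : ∀ z, BddAbove (range fun n => T n z) := fun z => by
    refine ⟨z.1 + C ⌈|z.2|⌉₊, ?_⟩
    rintro _ ⟨n, rfl⟩
    have := hT n z
    have : 0 ≤ |(n:ℝ)| := abs_nonneg _
    simp only
    linarith
  let h : Plane → ℝ := fun z => ⨆ n, T n z
  have hle : ∀ n z, T n z ≤ h z := fun n z => le_ciSup (hbdd z) n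
  refine ⟨h, ?_, ?_, ?_⟩
  · -- continuity
    rw [continuous_iff_continuousAt]
    intro z₀
    obtain ⟨W, hW⟩ : ∃ W, ∀ᶠ z : Plane in 𝓝 z₀, w z.2 < W :=
      ⟨w z₀.2 + 1, ((hwc.comp continuous_snd).tendsto z₀).eventually_lt_const (by simp)⟩
    have hy : ∀ᶠ z : Plane in 𝓝 z₀, |z.2| < |z₀.2| + 1 :=
      ((continuous_abs.comp continuous_snd).tendsto z₀).eventually_lt_const (by simp)
    let N : ℕ := ⌈2 * (C ⌈|z₀.2| + 1⌉₊ + W)⌉₊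
    let S : Finset ℤ := Finset.Icc (-(N:ℤ)) N
    have hS0 : (0:ℤ) ∈ S := Finset.mem_Icc.2 ⟨by simp, by simp⟩
    have hSne : S.Nonempty := ⟨0, hS0⟩
    have heq : ∀ᶠ z in 𝓝 z₀, S.sup' hSne (fun n => T n z) = h z := by
      filter_upwards [hW, hy] with z hz1 hz2
      apply le_antisymm
      · exact Finset.sup'_le _ _ (fun n _ => hle n z)
      · refine ciSup_le (fun n => ?_)
        by_cases hn : n ∈ S
        · exact Finset.le_sup' (fun n => T n z) hn
        · refine le_trans ?_ (Finset.le_sup' (fun n => T n z) hS0)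
          have hn' : (N:ℝ) ≤ |(n:ℝ)| := by
            have : (N:ℤ) ≤ |n| := by
              simp only [S, Finset.mem_Icc, not_and_or, not_le] at hn
              rcases hn with h | h
              · rw [abs_of_neg (by omega)]; omega
              · rw [abs_of_pos (by omega)]; omega
            exact_mod_cast this
          have e1 := hT n z
          have e2 : C ⌈|z.2|⌉₊ ≤ C ⌈|z₀.2| + 1⌉₊ := hCmono (Nat.ceil_mono hz2.le)
          have e3 := Nat.le_ceil (2 * (C ⌈|z₀.2| + 1⌉₊ + W))
          have e4 : T 0 z = z.1 - w z.2 := by simp [T]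
          rw [e4]
          have e5 : (2 * (C ⌈|z₀.2| + 1⌉₊ + W)) ≤ |(n:ℝ)| := e3.trans hn'
          linarith
    refine ContinuousAt.congr ?_ heq
    exact (Continuous.finset_sup'_apply hSne (fun n _ => hTc n)).continuousAt
  · intro x y
    have : ∀ n, T n (x + 1, y) = T n (x, y) + 1 := fun n => by
      simp only [T, hF.zpow n x y]; ring
    apply le_antisymm
    · refine ciSup_le (fun n => ?_)
      rw [this]; linarith [hle n (x, y)]
    · have : h (x, y) ≤ h (x + 1, y) - 1 := ciSup_le (fun n => by
        linarith [hle n (x + 1, y), this n])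
      linarith
  · intro p
    have step : ∀ n, T n (F p) = ((F ^ (n + 1)) p).1 - w ((F ^ (n + 1)) p).2
        - ((q : ℝ) - 1) * |(n : ℝ)| := fun n => by
      simp only [T, zpow_add_one]; rfl
    have hab : ∀ n : ℤ, |(((q : ℝ) - 1) * |((n + 1 : ℤ) : ℝ)| - ((q : ℝ) - 1) * |(n : ℝ)|)|
        ≤ (q : ℝ) - 1 := fun n => by
      rw [← mul_sub, abs_mul, abs_of_nonneg (by linarith : 0 ≤ (q:ℝ) - 1)]
      have h1 := abs_abs_sub_abs_le_abs_sub (((n + 1 : ℤ) : ℝ)) (n : ℝ)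
      have h2 : |(((n + 1 : ℤ) : ℝ)) - (n : ℝ)| = 1 := by push_cast; simp
      rw [h2] at h1
      have := mul_le_mul_of_nonneg_left h1 (by linarith : 0 ≤ (q:ℝ) - 1)
      linarith
    have u1 : h (F p) ≤ h p + ((q:ℝ) - 1) := ciSup_le (fun n => by
      have h1 := hle (n + 1) p
      have h2 := step n
      have h3 := abs_le.1 (hab n)
      simp only [T] at h1
      linarith [h3.1, h3.2])
    have u2 : h p ≤ h (F p) + ((q:ℝ) - 1) := ciSup_le (fun n => by
      have h1 := hle (n - 1) (F p)
      have h2 := step (n - 1)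
      have h3 := abs_le.1 (hab (n - 1))
      rw [sub_add_cancel] at h2 h3
      simp only [T] at h1 h2 ⊢
      linarith [h3.1, h3.2])
    rw [abs_le]
    constructor <;> linarith

/-- The six directions of the triangular lattice, in cyclic order. -/
def dirs : Fin 6 → ℤ × ℤ := ![(1, 0), (0, 1), (-1, 1), (-1, 0), (0, -1), (1, -1)]

lemma dirs_sum (k : Fin 6) : dirs (k - 1) + dirs (k + 1) = dirs k := by
  revert k; decide
lemma dirs_opp (k : Fin 6) : dirs (k - 1) + dirs (k + 2) = 0 := by
  revert k; decide
lemma dirs_opp' (k : Fin 6) : dirs (k + 1) + dirs (k - 2) = 0 := by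
  revert k; decide
lemma dirs_bound (k : Fin 6) : -1 ≤ (dirs k).2 ∧ (dirs k).2 ≤ 1 ∧ -1 ≤ (dirs k).1 ∧
    (dirs k).1 ≤ 1 := by
  revert k; decide

/-- States: a lattice point and a direction. -/
abbrev St := (ℤ × ℤ) × Fin 6

/-- Mixed states for a colouring `A`. -/
def Mixed (A : ℤ × ℤ → Prop) (s : St) : Prop := A s.1 ∧ ¬ A (s.1 + dirs s.2)

open Classical in
/-- The upward exploration step. -/
def stepU (A : ℤ × ℤ → Prop) (s : St) : St :=
  if A (s.1 + dirs (s.2 - 1)) then (s.1 + dirs (s.2 - 1), s.2 + 1) else (s.1, s.2 - 1)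

open Classical in
/-- The downward exploration step. -/
def stepD (A : ℤ × ℤ → Prop) (s : St) : St :=
  if A (s.1 + dirs (s.2 + 1)) then (s.1 + dirs (s.2 + 1), s.2 - 1) else (s.1, s.2 + 1)

lemma mixed_stepU {A : ℤ × ℤ → Prop} {s : St} (h : Mixed A s) : Mixed A (stepU A s) := by
  unfold stepU
  split_ifs with hc
  · refine ⟨hc, ?_⟩
    simp only
    rw [add_assoc, dirs_sum]; exact h.2
  · exact ⟨h.1, hc⟩

lemma mixed_stepD {A : ℤ × ℤ → Prop} {s : St} (h : Mixed A s) : Mixed A (stepD A s) := by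
  unfold stepD
  split_ifs with hc
  · refine ⟨hc, ?_⟩
    simp only
    rw [add_assoc, add_comm (dirs _), dirs_sum]; exact h.2
  · exact ⟨h.1, hc⟩

lemma stepD_stepU {A : ℤ × ℤ → Prop} {s : St} (h : Mixed A s) : stepD A (stepU A s) = s := by
  by_cases hc : A (s.1 + dirs (s.2 - 1))
  · have e : stepU A s = (s.1 + dirs (s.2 - 1), s.2 + 1) := if_pos hc
    rw [e]; unfold stepD; simp only
    have e2 : s.1 + dirs (s.2 - 1) + dirs (s.2 + 1 + 1) = s.1 := by
      rw [add_assoc, show s.2 + 1 + 1 = s.2 + 2 by rw [add_assoc]; rfl, dirs_opp, add_zero]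
    rw [e2, if_pos h.1]; simp
  · have e : stepU A s = (s.1, s.2 - 1) := if_neg hc
    rw [e]; unfold stepD; simp only
    rw [if_neg (by rw [sub_add_cancel]; exact h.2), sub_add_cancel]

lemma stepU_stepD {A : ℤ × ℤ → Prop} {s : St} (h : Mixed A s) : stepU A (stepD A s) = s := by
  by_cases hc : A (s.1 + dirs (s.2 + 1))
  · have e : stepD A s = (s.1 + dirs (s.2 + 1), s.2 - 1) := if_pos hc
    rw [e]; unfold stepU; simp only
    have e2 : s.1 + dirs (s.2 + 1) + dirs (s.2 - 1 - 1) = s.1 := by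
      rw [add_assoc, show s.2 - 1 - 1 = s.2 - 2 by rw [sub_sub]; rfl, dirs_opp', add_zero]
    rw [e2, if_pos h.1]; simp
  · have e : stepD A s = (s.1, s.2 + 1) := if_neg hc
    rw [e]; unfold stepU; simp only
    rw [if_neg (by rw [add_sub_cancel_right]; exact h.2), add_sub_cancel_right]

/-- The row of a state. -/
def row (s : St) : ℤ := s.1.2

lemma row_stepU (A : ℤ × ℤ → Prop) (s : St) :
    row (stepU A s) ≤ row s + 1 ∧ row s ≤ row (stepU A s) + 1 := by
  have := dirs_bound (s.2 - 1)
  unfold stepU row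
  split_ifs <;> simp <;> omega

lemma row_stepD (A : ℤ × ℤ → Prop) (s : St) :
    row (stepD A s) ≤ row s + 1 ∧ row s ≤ row (stepD A s) + 1 := by
  have := dirs_bound (s.2 + 1)
  unfold stepD row
  split_ifs <;> simp <;> omega

lemma stepU_congr {A B : ℤ × ℤ → Prop} {s : St}
    (h : ∀ v : ℤ × ℤ, row s - 1 ≤ v.2 → v.2 ≤ row s + 1 → (A v ↔ B v)) :
    stepU A s = stepU B s := by
  have := dirs_bound (s.2 - 1)
  have e : A (s.1 + dirs (s.2 - 1)) ↔ B (s.1 + dirs (s.2 - 1)) := by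
    apply h <;> simp [row] <;> omega
  unfold stepU
  by_cases hh : A (s.1 + dirs (s.2 - 1))
  · rw [if_pos hh, if_pos (e.1 hh)]
  · rw [if_neg hh, if_neg (fun h' => hh (e.2 h'))]

lemma stepD_congr {A B : ℤ × ℤ → Prop} {s : St}
    (h : ∀ v : ℤ × ℤ, row s - 1 ≤ v.2 → v.2 ≤ row s + 1 → (A v ↔ B v)) :
    stepD A s = stepD B s := by
  have := dirs_bound (s.2 + 1)
  have e : A (s.1 + dirs (s.2 + 1)) ↔ B (s.1 + dirs (s.2 + 1)) := by
    apply h <;> simp [row] <;> omega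
  unfold stepD
  by_cases hh : A (s.1 + dirs (s.2 + 1))
  · rw [if_pos hh, if_pos (e.1 hh)]
  · rw [if_neg hh, if_neg (fun h' => hh (e.2 h'))]

lemma mixed_congr {A B : ℤ × ℤ → Prop} {s : St}
    (h : ∀ v : ℤ × ℤ, row s - 1 ≤ v.2 → v.2 ≤ row s + 1 → (A v ↔ B v)) :
    Mixed A s ↔ Mixed B s := by
  have := dirs_bound s.2
  have e : A (s.1 + dirs s.2) ↔ B (s.1 + dirs s.2) := by
    apply h <;> simp [row] <;> omega
  have e2 : A s.1 ↔ B s.1 := by apply h <;> simp [row]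
  unfold Mixed
  rw [e, e2]

/-- Rows are eventually in `A` to the east and outside `A` to the west. -/
def GoodRows (A : ℤ × ℤ → Prop) : Prop :=
  ∀ j : ℤ, ∃ I : ℤ, (∀ i, I ≤ i → A (i, j)) ∧ (∀ i, i ≤ -I → ¬ A (i, j))

lemma finite_row {A : ℤ × ℤ → Prop} (hA : GoodRows A) (j : ℤ) :
    {s : St | Mixed A s ∧ row s = j}.Finite := by
  choose I hI1 hI2 using hA
  let M := |I (j - 1)| + |I j| + |I (j + 1)| + 1
  refine Set.Finite.subset (((Set.finite_Icc (-M) M).prod (Set.finite_singleton j)).prod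
    (Set.finite_univ (α := Fin 6))) ?_
  rintro ⟨⟨a, b⟩, k⟩ ⟨⟨h1, h2⟩, h3⟩
  simp only [row] at h3
  subst h3
  have hk := dirs_bound k
  have e1 := le_abs_self (I (b - 1))
  have e2 := le_abs_self (I b)
  have e3 := le_abs_self (I (b + 1))
  have e4 := abs_nonneg (I (b - 1))
  have e5 := abs_nonneg (I b)
  have e6 := abs_nonneg (I (b + 1))
  refine ⟨⟨⟨?_, ?_⟩, rfl⟩, mem_univ _⟩
  · by_contra hc
    simp only [M] at hc
    exact hI2 b a (by omega) h1
  · by_contra hc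
    simp only [M] at hc
    apply h2
    have : ((a, b) : ℤ × ℤ) + dirs k = (a + (dirs k).1, b + (dirs k).2) := rfl
    simp only [this]
    obtain h | h | h : (dirs k).2 = -1 ∨ (dirs k).2 = 0 ∨ (dirs k).2 = 1 := by omega
    · rw [h]; exact hI1 (b - 1) _ (by omega)
    · rw [h, add_zero]; exact hI1 b _ (by omega)
    · rw [h]; exact hI1 (b + 1) _ (by omega)

/-- Discrete properness. -/
lemma tendsto_of_unbdd (u : ℕ → ℤ) (h1 : ∀ n, u n ≤ u (n + 1) + 1)
    (hfin : ∀ j, {n | u n = j}.Finite) (hun : ∀ B, ∃ n, B ≤ u n) : Tendsto u atTop atTop := by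
  rw [tendsto_atTop]
  intro B
  obtain ⟨N, hN⟩ := (hfin B).bddAbove
  -- find n0 > N with u n0 > B
  obtain ⟨n0, hn0, hn0'⟩ : ∃ n0, N < n0 ∧ B < u n0 := by
    by_contra hc
    push Not at hc
    obtain ⟨n, hn⟩ := hun (B + 1 + ∑ i ∈ Finset.range (N + 1), |u i|)
    have hs : 0 ≤ ∑ i ∈ Finset.range (N + 1), |u i| := Finset.sum_nonneg (fun _ _ => abs_nonneg _)
    by_cases h : N < n
    · have := hc n h; omega
    · have e1 : |u n| ≤ ∑ i ∈ Finset.range (N + 1), |u i| :=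
        Finset.single_le_sum (f := fun n => |u n|) (fun i _ => abs_nonneg _)
          (Finset.mem_range.2 (by omega))
      have e2 := le_abs_self (u n)
      obtain ⟨n', hn'⟩ := hun (B + 1 + ∑ i ∈ Finset.range (N + 1), |u i|)
      -- B could be negative: use another bound
      obtain ⟨n'', hn''⟩ := hun (|B| + 1 + ∑ i ∈ Finset.range (N + 1), |u i|)
      have eB := le_abs_self B
      have eB' := abs_nonneg B
      by_cases h'' : N < n''
      · have := hc n'' h''; omega
      · have e3 : |u n''| ≤ ∑ i ∈ Finset.range (N + 1), |u i| :=
          Finset.single_le_sum (f := fun n => |u n|) (fun i _ => abs_nonneg _)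
            (Finset.mem_range.2 (by omega))
        have e4 := le_abs_self (u n'')
        omega
  filter_upwards [eventually_ge_atTop n0] with n hn
  have : B < u n := by
    induction n, hn using Nat.le_induction with
    | base => exact hn0'
    | succ n hn ih =>
      have e1 := h1 n
      have e2 : u (n + 1) ≠ B := fun h => by
        have : n + 1 ≤ N := hN h
        omega
      omega
  exact this.le

lemma unbdd_of_bddBelow (u : ℕ → ℤ) (hfin : ∀ j, {n | u n = j}.Finite) (c : ℤ)
    (hc : ∀ n, c ≤ u n) (B : ℤ) : ∃ n, B ≤ u n := by
  by_contra h
  push Not at h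
  have : (univ : Set ℕ) ⊆ ⋃ j ∈ Set.Icc c B, {n | u n = j} := fun n _ =>
    mem_iUnion₂.2 ⟨u n, ⟨hc n, (h n).le⟩, rfl⟩
  exact Set.infinite_univ ((Set.Finite.biUnion (Set.finite_Icc c B) (fun j _ => hfin j)).subset this)

lemma mixed_iterU {A : ℤ × ℤ → Prop} {s : St} (h : Mixed A s) (n : ℕ) :
    Mixed A ((stepU A)^[n] s) := by
  induction n with
  | zero => exact h
  | succ n ih => rw [Function.iterate_succ_apply']; exact mixed_stepU ih

lemma mixed_iterD {A : ℤ × ℤ → Prop} {s : St} (h : Mixed A s) (n : ℕ) :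
    Mixed A ((stepD A)^[n] s) := by
  induction n with
  | zero => exact h
  | succ n ih => rw [Function.iterate_succ_apply']; exact mixed_stepD ih

lemma iterD_iterU {A : ℤ × ℤ → Prop} {s : St} (h : Mixed A s) (n : ℕ) :
    (stepD A)^[n] ((stepU A)^[n] s) = s := by
  induction n with
  | zero => rfl
  | succ n ih =>
    rw [Function.iterate_succ_apply' (stepU A), Function.iterate_succ_apply,
      stepD_stepU (mixed_iterU h n), ih]

lemma iterD_iterU_add {A : ℤ × ℤ → Prop} {s : St} (h : Mixed A s) (n m : ℕ) :
    (stepD A)^[n] ((stepU A)^[n + m] s) = (stepU A)^[m] s := by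
  rw [Function.iterate_add_apply, iterD_iterU (mixed_iterU h m)]

lemma finite_visits {A : ℤ × ℤ → Prop} (hA : GoodRows A) (o : ℕ → St)
    (hm : ∀ n, Mixed A (o n)) (hi : Function.Injective o) (j : ℤ) :
    {n | row (o n) = j}.Finite :=
  Set.Finite.of_finite_image ((finite_row hA j).subset (by
    rintro _ ⟨n, hn, rfl⟩; exact ⟨hm n, hn⟩)) hi.injOn

open Classical in
/-- The modified colouring, straight below row `-m`. -/
def Amod (A : ℤ × ℤ → Prop) (m : ℕ) : ℤ × ℤ → Prop := fun v =>
  if v.2 ≤ -(m:ℤ) then 0 ≤ v.1 else A v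

lemma Amod_low {A : ℤ × ℤ → Prop} {m : ℕ} {a b : ℤ} (h : b ≤ -(m:ℤ)) :
    Amod A m (a, b) ↔ 0 ≤ a := by simp [Amod, h]

lemma Amod_high {A : ℤ × ℤ → Prop} {m : ℕ} {v : ℤ × ℤ} (h : -(m:ℤ) < v.2) :
    Amod A m v ↔ A v := by simp [Amod, h]

lemma goodRows_Amod {A : ℤ × ℤ → Prop} (hA : GoodRows A) (m : ℕ) : GoodRows (Amod A m) := by
  intro j
  by_cases h : j ≤ -(m:ℤ)
  · refine ⟨1, fun i hi => (Amod_low h).2 (by omega), fun i hi => ?_⟩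
    rw [Amod_low h]; omega
  · obtain ⟨I, h1, h2⟩ := hA j
    refine ⟨I, fun i hi => (Amod_high (by simpa using h)).2 (h1 i hi), fun i hi => ?_⟩
    rw [Amod_high (by simpa using h)]; exact h2 i hi

lemma stepD_low {A : ℤ × ℤ → Prop} {m : ℕ} {s : St} (hs : Mixed (Amod A m) s)
    (h : row s ≤ -(m:ℤ) - 1) : row (stepD (Amod A m) s) ≤ -(m:ℤ) - 1 := by
  obtain ⟨⟨a, b⟩, k⟩ := s
  simp only [row] at h
  obtain ⟨h1, h2⟩ := hs
  have e : ∀ k, ((a, b) : ℤ × ℤ) + dirs k = (a + (dirs k).1, b + (dirs k).2) := fun _ => rfl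
  simp only at h1 h2
  rw [Amod_low (by omega)] at h1
  rw [e, Amod_low (by have := dirs_bound k; omega)] at h2
  have hb := dirs_bound (k + 1)
  unfold stepD
  simp only [e, Amod_low (by omega : b + (dirs (k + 1)).2 ≤ -(m:ℤ)), row]
  have key : ∀ k : Fin 6, (dirs k).1 < 0 → (dirs (k + 1)).2 ≤ 0 := by decide
  have := key k (by omega)
  split_ifs <;> simp <;> omega

lemma exists_crossing {A : ℤ × ℤ → Prop} (hA : GoodRows A) (m : ℕ) (hm : 2 ≤ m) :
    ∃ e : St, Mixed A e ∧ row e = 0 ∧ (∀ n, 1 ≤ n → 1 ≤ row ((stepU A)^[n] e)) ∧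
      ∃ n, row ((stepD A)^[n] e) ≤ -(m:ℤ) + 1 := by
  let B := Amod A m
  have hB : GoodRows B := goodRows_Amod hA m
  let t₀ : St := ((0, -(m:ℤ)), 3)
  have ht₀ : Mixed B t₀ := by
    refine ⟨(Amod_low le_rfl).2 le_rfl, ?_⟩
    have : ((0, -(m:ℤ)) : ℤ × ℤ) + dirs 3 = (-1, -(m:ℤ)) := by
      simp [dirs]
    simp only [t₀, this, B]
    rw [Amod_low le_rfl]; omega
  let o : ℕ → St := fun n => (stepU B)^[n] t₀
  have ho : ∀ n, Mixed B (o n) := mixed_iterU ht₀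
  have hos : ∀ n, o (n + 1) = stepU B (o n) := fun n => Function.iterate_succ_apply' _ _ _
  have hlow : ∀ n, -(m:ℤ) ≤ row (o n) := by
    intro n
    induction n with
    | zero => simp [o, t₀, row]
    | succ n ih =>
      by_contra hc
      push Not at hc
      have := stepD_low (ho (n + 1)) (by omega)
      rw [hos, stepD_stepU (ho n)] at this
      omega
  have hinj : Function.Injective o := by
    intro i j hij
    wlog hlt : i < j generalizing i j
    · rcases lt_trichotomy i j with h | h | h
      · exact absurd h hlt
      · exact h
      · exact (this hij.symm h).symm
    exfalso
    obtain ⟨p, rfl⟩ := Nat.exists_eq_add_of_lt hlt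
    have h1 : (stepD B)^[i] (o i) = t₀ := iterD_iterU ht₀ i
    have h2 : (stepD B)^[i] (o (i + p + 1)) = o (p + 1) := by
      have := iterD_iterU_add ht₀ i (p + 1)
      rwa [← add_assoc] at this
    rw [hij, h2, hos] at h1
    have h3 := stepD_stepU (ho p)
    rw [h1] at h3
    have h4 : row (stepD B t₀) = -(m:ℤ) - 1 := by
      have e : ((0, -(m:ℤ)) : ℤ × ℤ) + dirs (3 + 1) = (0, -(m:ℤ) - 1) := by
        have : dirs (3 + 1) = (0, -1) := by decide
        rw [this]; ext <;> simp; rfl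
      have : B (0, -(m:ℤ) - 1) := (Amod_low (by omega)).2 le_rfl
      unfold stepD
      simp only [t₀, e, this, row, if_true]
    rw [h3] at h4
    have := hlow p
    omega
  let u : ℕ → ℤ := fun n => row (o n)
  have hu1 : ∀ n, u n ≤ u (n + 1) + 1 ∧ u (n + 1) ≤ u n + 1 := fun n => by
    simp only [u, hos]
    exact ⟨(row_stepU B (o n)).2, (row_stepU B (o n)).1⟩
  have hfin := finite_visits hB o ho hinj
  have hlim : Tendsto u atTop atTop := tendsto_of_unbdd u (fun n => (hu1 n).1) hfin
    (unbdd_of_bddBelow u hfin _ hlow)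
  -- last visit to row ≤ 0
  obtain ⟨N, hN⟩ := (hlim.eventually_ge_atTop 1).exists_forall_of_atTop
  have hex : ∃ N, ∀ n ≥ N, 1 ≤ u n := ⟨N, hN⟩
  classical
  let N₀ := Nat.find hex
  have hN₀ : ∀ n ≥ N₀, 1 ≤ u n := Nat.find_spec hex
  have hN₀pos : N₀ ≠ 0 := by
    intro h0
    have := hN₀ 0 (by omega)
    simp only [u, o, t₀, row, Function.iterate_zero, id] at this
    omega
  obtain ⟨M, hM⟩ := Nat.exists_eq_succ_of_ne_zero hN₀pos
  have huM : u M ≤ 0 := by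
    by_contra hc
    push Not at hc
    have : N₀ ≤ M := Nat.find_min' hex (fun n hn => by
      rcases eq_or_lt_of_le hn with h | h
      · rw [← h]; omega
      · exact hN₀ n (by omega))
    omega
  have huM0 : u M = 0 := by
    have h1 := (hu1 M).2
    have h2 := hN₀ (M + 1) (by omega)
    omega
  have hagree : ∀ s : St, -(m:ℤ) + 2 ≤ row s → ∀ v : ℤ × ℤ, row s - 1 ≤ v.2 → v.2 ≤ row s + 1 →
      (B v ↔ A v) := fun s hs v h1 h2 => Amod_high (by omega)
  have hrM : row (o M) = 0 := huM0
  have hfw : ∀ n, (stepU A)^[n] (o M) = o (n + M) := by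
    intro n
    induction n with
    | zero => simp
    | succ n ih =>
      have hr : 0 ≤ row (o (n + M)) := by
        rcases Nat.eq_zero_or_pos n with h | h
        · subst h; rw [zero_add, hrM]
        · have := hN₀ (n + M) (by omega)
          simp only [u] at this; omega
      rw [Function.iterate_succ_apply', ih, show n + 1 + M = n + M + 1 by ring, hos]
      exact (stepU_congr (hagree _ (by omega))).symm
  refine ⟨o M, (mixed_congr (hagree _ (by omega))).1 (ho M), hrM, ?_, ?_⟩
  · intro n hn
    rw [hfw]
    exact hN₀ _ (by omega)
  · by_contra hc
    push Not at hc
    have hbw : ∀ n, (stepD B)^[n] (o M) = (stepD A)^[n] (o M) := by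
      intro n
      induction n with
      | zero => rfl
      | succ n ih =>
        rw [Function.iterate_succ_apply', Function.iterate_succ_apply', ih]
        exact stepD_congr (hagree _ (by have := hc n; omega))
    have h1 : (stepD B)^[M] (o M) = t₀ := iterD_iterU ht₀ M
    rw [hbw] at h1
    have := hc M
    rw [h1] at this
    simp only [t₀, row] at this
    omega

/-- The exploration permutation of mixed states. -/
def permU (A : ℤ × ℤ → Prop) : Equiv.Perm {s : St // Mixed A s} where
  toFun s := ⟨stepU A s.1, mixed_stepU s.2⟩
  invFun s := ⟨stepD A s.1, mixed_stepD s.2⟩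
  left_inv s := Subtype.ext (stepD_stepU s.2)
  right_inv s := Subtype.ext (stepU_stepD s.2)

lemma permU_pow (A : ℤ × ℤ → Prop) (e : {s : St // Mixed A s}) (n : ℕ) :
    (((permU A) ^ n) e).1 = (stepU A)^[n] e.1 := by
  induction n with
  | zero => rfl
  | succ n ih =>
    rw [pow_succ', Equiv.Perm.mul_apply, Function.iterate_succ_apply', ← ih]; rfl

lemma permU_inv_pow (A : ℤ × ℤ → Prop) (e : {s : St // Mixed A s}) (n : ℕ) :
    (((permU A)⁻¹ ^ n) e).1 = (stepD A)^[n] e.1 := by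
  induction n with
  | zero => rfl
  | succ n ih =>
    rw [pow_succ', Equiv.Perm.mul_apply, Function.iterate_succ_apply', ← ih]; rfl

lemma exists_seed {A : ℤ × ℤ → Prop} (hA : GoodRows A) :
    ∃ e : St, Mixed A e ∧ row e = 0 ∧ (∀ n, 1 ≤ n → 1 ≤ row ((stepU A)^[n] e)) ∧
      ∀ B : ℤ, ∃ n, row ((stepD A)^[n] e) ≤ B := by
  by_contra hc
  have hc' : ∀ e : St, ∃ B : ℤ, Mixed A e → row e = 0 →
      (∀ n, 1 ≤ n → 1 ≤ row ((stepU A)^[n] e)) → ∀ n, B < row ((stepD A)^[n] e) := by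
    intro e
    by_contra h
    push Not at h
    apply hc
    have h0 := h 0
    exact ⟨e, h0.1, h0.2.1, h0.2.2.1, fun B => (h B).2.2.2⟩
  choose Bf hBf using hc'
  obtain ⟨c, hcB⟩ := ((finite_row hA 0).image Bf).bddBelow
  obtain ⟨e, h1, h2, h3, n, h4⟩ := exists_crossing hA (2 + c.natAbs) (by omega)
  have h5 := hBf e h1 h2 h3 n
  have h6 : c ≤ Bf e := hcB ⟨e, ⟨h1, h2⟩, rfl⟩
  push_cast at h4
  have := neg_abs_le c
  omega

lemma exists_orbit {A : ℤ × ℤ → Prop} (hA : GoodRows A) :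
    ∃ o : ℤ → St, (∀ n, Mixed A (o n)) ∧ (∀ n, o (n + 1) = stepU A (o n)) ∧
      Function.Injective o ∧ Tendsto (fun n => row (o n)) atTop atTop ∧
      Tendsto (fun n => row (o n)) atBot atBot := by
  obtain ⟨e, h1, h2, h3, h4⟩ := exists_seed hA
  let e' : {s : St // Mixed A s} := ⟨e, h1⟩
  let o : ℤ → St := fun n => (((permU A) ^ n) e').1
  have hpos : ∀ n : ℕ, o n = (stepU A)^[n] e := fun n => by
    simp only [o, zpow_natCast]; exact permU_pow A e' n
  have hneg : ∀ n : ℕ, o (-n) = (stepD A)^[n] e := fun n => by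
    simp only [o, zpow_neg, zpow_natCast, ← inv_pow]; exact permU_inv_pow A e' n
  have hm : ∀ n, Mixed A (o n) := fun n => (((permU A) ^ n) e').2
  have hs : ∀ n, o (n + 1) = stepU A (o n) := fun n => by
    simp only [o]
    rw [add_comm, zpow_add, zpow_one, Equiv.Perm.mul_apply]; rfl
  have hinj : Function.Injective o := by
    intro i j hij
    wlog hlt : i < j generalizing i j
    · rcases lt_trichotomy i j with h | h | h
      · exact absurd h hlt
      · exact h
      · exact (this hij.symm h).symm
    exfalso
    obtain ⟨p, hp⟩ := Int.eq_ofNat_of_zero_le (show 0 ≤ j - i by omega)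
    have hij' : ((permU A) ^ i) e' = ((permU A) ^ j) e' := Subtype.ext hij
    have : ((permU A) ^ (p : ℤ)) e' = e' := by
      rw [← hp, sub_eq_neg_add, zpow_add, Equiv.Perm.mul_apply, ← hij', ← Equiv.Perm.mul_apply,
        ← zpow_add]; simp
    have h5 : o p = e := congrArg Subtype.val this
    rw [hpos] at h5
    have h6 := h3 p (by omega)
    rw [h5] at h6; omega
  refine ⟨o, hm, hs, hinj, ?_, ?_⟩
  · have hi : Function.Injective (fun n : ℕ => o n) := fun a b h => by exact_mod_cast hinj h
    have hfin := finite_visits hA (fun n : ℕ => o n) (fun n => hm n) hi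
    have ht : Tendsto (fun n : ℕ => row (o n)) atTop atTop :=
      tendsto_of_unbdd _ (fun n => by push_cast; rw [hs]; exact (row_stepU A _).2) hfin
        (unbdd_of_bddBelow _ hfin 0 (fun n => by
          rcases Nat.eq_zero_or_pos n with h | h
          · subst h; rw [hpos]; exact h2.ge
          · have := h3 n h
            rw [hpos]; omega))
    rw [tendsto_atTop] at ht ⊢
    intro b
    obtain ⟨N, hN⟩ := (ht b).exists_forall_of_atTop
    filter_upwards [eventually_ge_atTop (N : ℤ)] with n hn
    have := hN n.toNat (by omega)
    rwa [Int.toNat_of_nonneg (by omega)] at this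
  · have hi : Function.Injective (fun n : ℕ => o (-n)) := fun a b h => by
      have := hinj h
      omega
    have hfin := finite_visits hA (fun n : ℕ => o (-n)) (fun n => hm _) hi
    have ht : Tendsto (fun n : ℕ => -row (o (-n))) atTop atTop := by
      refine tendsto_of_unbdd _ (fun n => ?_) (fun j => ?_) (fun B => ?_)
      · have := (row_stepU A (o (-((n + 1 : ℕ) : ℤ)))).2
        rw [← hs] at this
        have e3 : -((n + 1 : ℕ) : ℤ) + 1 = -(n : ℤ) := by push_cast; ring
        rw [e3] at this
        omega
      · refine (hfin (-j)).subset (fun n hn => ?_)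
        simp only [mem_ofPred_eq] at hn ⊢; omega
      · obtain ⟨n, hn⟩ := h4 (-B)
        exact ⟨n, by rw [hneg]; omega⟩
    rw [tendsto_atTop] at ht
    rw [tendsto_atBot]
    intro b
    obtain ⟨N, hN⟩ := (ht (-b)).exists_forall_of_atTop
    filter_upwards [eventually_le_atBot (-(N : ℤ))] with n hn
    have := hN (-n).toNat (by omega)
    rw [Int.toNat_of_nonneg (by omega), neg_neg] at this
    omega

/-- Kagome vertex of a state (doubled coordinates). -/
def kv (s : St) : ℤ × ℤ := s.1 + s.1 + dirs s.2

lemma kv_inj {A : ℤ × ℤ → Prop} {s t : St} (hs : Mixed A s) (ht : Mixed A t) (h : kv s = kv t) :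
    s = t := by
  obtain ⟨⟨a, b⟩, k⟩ := s
  obtain ⟨⟨c, d⟩, l⟩ := t
  have h1 : a + a + (dirs k).1 = c + c + (dirs l).1 := congrArg Prod.fst h
  have h2 : b + b + (dirs k).2 = d + d + (dirs l).2 := congrArg Prod.snd h
  have key : ∀ k l : Fin 6, ((dirs k).1 - (dirs l).1) % 2 = 0 → ((dirs k).2 - (dirs l).2) % 2 = 0 →
      k = l ∨ dirs l = - dirs k := by decide
  rcases key k l (by omega) (by omega) with h3 | h3
  · subst h3
    have : a = c := by omega
    have : b = d := by omega
    subst_vars; rfl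
  · exfalso
    have e1 : (dirs l).1 = -(dirs k).1 := by rw [h3]; rfl
    have e2 : (dirs l).2 = -(dirs k).2 := by rw [h3]; rfl
    apply hs.2
    have : ((a, b) : ℤ × ℤ) + dirs k = (c, d) := by
      ext <;> simp <;> omega
    simp only [this]
    exact ht.1

lemma kv_step (A : ℤ × ℤ → Prop) (s : St) : ∃ k : Fin 6, kv (stepU A s) = kv s + dirs k := by
  unfold stepU kv
  split_ifs with h
  · refine ⟨s.2 - 1, ?_⟩
    have := dirs_sum s.2
    simp only
    rw [← this]; abel
  · have key : ∀ k : Fin 6, ∃ l, dirs (k - 1) = dirs k + dirs l := by decide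
    obtain ⟨l, hl⟩ := key s.2
    exact ⟨l, by simp only; rw [hl]; abel⟩

lemma exists_kagome {A : ℤ × ℤ → Prop} (hA : GoodRows A) :
    ∃ v : ℤ → ℤ × ℤ, Function.Injective v ∧ (∀ n, ∃ k, v (n + 1) = v n + dirs k) ∧
      (∀ n, ∃ a k, A a ∧ ¬ A (a + dirs k) ∧ v n = a + a + dirs k) ∧
      Tendsto (fun n => (v n).2) atTop atTop ∧ Tendsto (fun n => (v n).2) atBot atBot := by
  obtain ⟨o, h1, h2, h3, h4, h5⟩ := exists_orbit hA
  have hb : ∀ n, 2 * row (o n) - 1 ≤ (kv (o n)).2 ∧ (kv (o n)).2 ≤ 2 * row (o n) + 1 := fun n => by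
    have := dirs_bound (o n).2
    simp only [kv, row, Prod.snd_add]; omega
  refine ⟨fun n => kv (o n), fun i j h => h3 (kv_inj (h1 i) (h1 j) h), fun n => ?_, fun n =>
    ⟨(o n).1, (o n).2, (h1 n).1, (h1 n).2, rfl⟩, ?_, ?_⟩
  · simp only [h2]; exact kv_step A _
  · rw [tendsto_atTop] at h4 ⊢
    intro b
    filter_upwards [h4 (|b| + 1)] with n hn
    have := hb n
    have := le_abs_self b
    have := abs_nonneg b
    omega
  · rw [tendsto_atBot] at h5 ⊢
    intro b
    filter_upwards [h5 (-|b| - 1)] with n hn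
    have := hb n
    have := neg_abs_le b
    have := abs_nonneg b
    omega

/-- Piecewise linear interpolation of an integer-indexed sequence. -/
def plin (u : ℤ → ℝ) (t : ℝ) : ℝ := u ⌊t⌋ + Int.fract t * (u (⌊t⌋ + 1) - u ⌊t⌋)

lemma plin_continuous (u : ℤ → ℝ) : Continuous (plin u) := by
  refine LocallyFinite.continuous (f := fun n : ℤ => Icc (n : ℝ) (n + 1)) ?_ ?_
    (fun n => isClosed_Icc) ?_
  · intro x
    refine ⟨Ioo (x - 1) (x + 1), Ioo_mem_nhds (by linarith) (by linarith), ?_⟩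
    refine (Set.finite_Icc (⌊x⌋ - 3) (⌊x⌋ + 3)).subset ?_
    rintro n ⟨y, ⟨h1, h2⟩, h3, h4⟩
    have e1 := Int.floor_le x
    have e2 := Int.lt_floor_add_one x
    have : (⌊x⌋ : ℝ) - 3 ≤ n := by linarith
    have : (n : ℝ) ≤ ⌊x⌋ + 3 := by linarith
    constructor <;> (rify; linarith)
  · exact eq_univ_of_forall fun x => mem_iUnion.2 ⟨⌊x⌋, Int.floor_le x, (Int.lt_floor_add_one x).le⟩
  · intro n
    have : ContinuousOn (fun t : ℝ => u n + (t - n) * (u (n + 1) - u n)) (Icc (n : ℝ) (n + 1)) := by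
      fun_prop
    refine this.congr ?_
    rintro t ⟨h1, h2⟩
    rcases eq_or_lt_of_le h2 with h | h
    · subst h
      have : ⌊(n : ℝ) + 1⌋ = n + 1 := by
        rw [Int.floor_eq_iff]; push_cast; constructor <;> linarith
      simp [plin, this, Int.fract]
    · have : ⌊t⌋ = n := Int.floor_eq_iff.2 ⟨h1, h⟩
      simp [plin, this, Int.fract]

lemma seg_cross (k l : Fin 6) (r s : ℝ) (hr0 : 0 ≤ r) (hr1 : r < 1) (hs0 : 0 ≤ s) (hs1 : s < 1)
    (X Y : ℤ) (hX : (X : ℝ) = s * (dirs l).1 - r * (dirs k).1)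
    (hY : (Y : ℝ) = s * (dirs l).2 - r * (dirs k).2) :
    (X = 0 ∧ Y = 0) ∨ (X = -(dirs k).1 ∧ Y = -(dirs k).2 ∧ X = (dirs l).1 ∧ Y = (dirs l).2) := by
  have bd : ∀ (a b : ℤ) (Z : ℤ), -1 ≤ a → a ≤ 1 → -1 ≤ b → b ≤ 1 →
      (Z : ℝ) = s * a - r * b → -1 ≤ Z ∧ Z ≤ 1 := by
    intro a b Z h1 h2 h3 h4 hZ
    have h1' : (-1 : ℝ) ≤ a := by exact_mod_cast h1
    have h2' : (a : ℝ) ≤ 1 := by exact_mod_cast h2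
    have h3' : (-1 : ℝ) ≤ b := by exact_mod_cast h3
    have h4' : (b : ℝ) ≤ 1 := by exact_mod_cast h4
    have : (-2 : ℝ) < Z := by rw [hZ]; nlinarith
    have : (Z : ℝ) < 2 := by rw [hZ]; nlinarith
    have : -2 < Z := by exact_mod_cast ‹(-2 : ℝ) < Z›
    have : Z < 2 := by exact_mod_cast ‹(Z : ℝ) < 2›
    omega
  have hk := dirs_bound k
  have hl := dirs_bound l
  obtain ⟨x1, x2⟩ := bd _ _ X hl.2.2.1 hl.2.2.2 hk.2.2.1 hk.2.2.2 hX
  obtain ⟨y1, y2⟩ := bd _ _ Y hl.1 hl.2.1 hk.1 hk.2.1 hY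
  clear hk hl bd
  have hX' : X = -1 ∨ X = 0 ∨ X = 1 := by omega
  have hY' : Y = -1 ∨ Y = 0 ∨ Y = 1 := by omega
  clear x1 x2 y1 y2
  by_contra hc
  fin_cases k <;> fin_cases l <;> simp [dirs] at hX hY hc <;>
    rcases hX' with rfl | rfl | rfl <;> rcases hY' with rfl | rfl | rfl <;>
    simp at hX hY hc <;> linarith

lemma exists_grid_line {A : ℤ × ℤ → Prop} (hA : GoodRows A) :
    ∃ G : ℝ → ℝ × ℝ, Continuous G ∧ Function.Injective G ∧
      Tendsto (fun t => (G t).2) atTop atTop ∧ Tendsto (fun t => (G t).2) atBot atBot ∧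
      (∀ t, ∃ (a : ℤ × ℤ) (k : Fin 6), A a ∧ ¬ A (a + dirs k) ∧
        |(G t).1 - (a.1 + ((dirs k).1 : ℝ) / 2)| ≤ 1 / 2 ∧
        |(G t).2 - (a.2 + ((dirs k).2 : ℝ) / 2)| ≤ 1 / 2) := by
  obtain ⟨v, hinj, hstep, hmix, hN, hS⟩ := exists_kagome hA
  choose d hd using hstep
  have hd1 : ∀ n, ((v (n + 1)).1 : ℝ) = (v n).1 + (dirs (d n)).1 := fun n => by
    rw [hd]; simp
  have hd2 : ∀ n, ((v (n + 1)).2 : ℝ) = (v n).2 + (dirs (d n)).2 := fun n => by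
    rw [hd]; simp
  let u1 : ℤ → ℝ := fun n => (v n).1
  let u2 : ℤ → ℝ := fun n => (v n).2
  have e1 : ∀ t, plin u1 t = (v ⌊t⌋).1 + Int.fract t * (dirs (d ⌊t⌋)).1 := fun t => by
    simp only [plin, u1, hd1]; ring
  have e2 : ∀ t, plin u2 t = (v ⌊t⌋).2 + Int.fract t * (dirs (d ⌊t⌋)).2 := fun t => by
    simp only [plin, u2, hd2]; ring
  have hb1 : ∀ t, |plin u1 t - (v ⌊t⌋).1| ≤ 1 := fun t => by
    rw [e1, add_sub_cancel_left, abs_mul, abs_of_nonneg (Int.fract_nonneg t)]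
    have := (Int.fract_lt_one t).le
    have h := dirs_bound (d ⌊t⌋)
    have : |((dirs (d ⌊t⌋)).1 : ℝ)| ≤ 1 := by
      rw [abs_le]; exact ⟨by exact_mod_cast h.2.2.1, by exact_mod_cast h.2.2.2⟩
    exact mul_le_one₀ ‹_› (abs_nonneg _) this
  have hb2 : ∀ t, |plin u2 t - (v ⌊t⌋).2| ≤ 1 := fun t => by
    rw [e2, add_sub_cancel_left, abs_mul, abs_of_nonneg (Int.fract_nonneg t)]
    have := (Int.fract_lt_one t).le
    have h := dirs_bound (d ⌊t⌋)
    have : |((dirs (d ⌊t⌋)).2 : ℝ)| ≤ 1 := by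
      rw [abs_le]; exact ⟨by exact_mod_cast h.1, by exact_mod_cast h.2.1⟩
    exact mul_le_one₀ ‹_› (abs_nonneg _) this
  refine ⟨fun t => (plin u1 t / 2, plin u2 t / 2), ?_, ?_, ?_, ?_, ?_⟩
  · exact ((plin_continuous u1).div_const 2).prodMk ((plin_continuous u2).div_const 2)
  · intro s t hst
    have h1 : plin u1 s / 2 = plin u1 t / 2 := congrArg Prod.fst hst
    have h2 : plin u2 s / 2 = plin u2 t / 2 := congrArg Prod.snd hst
    rw [e1, e1] at h1
    rw [e2, e2] at h2
    have hc := seg_cross (d ⌊s⌋) (d ⌊t⌋) (Int.fract s) (Int.fract t) (Int.fract_nonneg s)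
      (Int.fract_lt_one s) (Int.fract_nonneg t) (Int.fract_lt_one t)
      ((v ⌊s⌋).1 - (v ⌊t⌋).1) ((v ⌊s⌋).2 - (v ⌊t⌋).2) (by push_cast; linarith)
      (by push_cast; linarith)
    rcases hc with ⟨h3, h4⟩ | ⟨h3, h4, h5, h6⟩
    · have h7 : v ⌊s⌋ = v ⌊t⌋ := by ext <;> omega
      have h8 := hinj h7
      rw [h8] at h1 h2
      have h9 : Int.fract s * (dirs (d ⌊t⌋)).1 = Int.fract t * (dirs (d ⌊t⌋)).1 := by linarith
      have h10 : Int.fract s * (dirs (d ⌊t⌋)).2 = Int.fract t * (dirs (d ⌊t⌋)).2 := by linarith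
      have key : ∀ k : Fin 6, (dirs k).1 ≠ 0 ∨ (dirs k).2 ≠ 0 := by decide
      have h11 : Int.fract s = Int.fract t := by
        rcases key (d ⌊t⌋) with h | h
        · exact mul_right_cancel₀ (by exact_mod_cast h) h9
        · exact mul_right_cancel₀ (by exact_mod_cast h) h10
      rw [← Int.floor_add_fract s, ← Int.floor_add_fract t, h8, h11]
    · exfalso
      have h7 : v ⌊t⌋ = v (⌊s⌋ + 1) := by rw [hd]; ext <;> simp <;> omega
      have h8 : v ⌊s⌋ = v (⌊t⌋ + 1) := by rw [hd]; ext <;> simp <;> omega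
      have := hinj h7
      have := hinj h8
      omega
  · rw [tendsto_atTop] at hN ⊢
    intro b
    obtain ⟨N, hN'⟩ := (hN ⌈2 * b + 1⌉).exists_forall_of_atTop
    filter_upwards [eventually_ge_atTop (N : ℝ)] with t ht
    have h1 : (⌈2 * b + 1⌉ : ℝ) ≤ ((v ⌊t⌋).2 : ℝ) := by exact_mod_cast hN' ⌊t⌋ (Int.le_floor.2 ht)
    have h2 := Int.le_ceil (2 * b + 1)
    have h3 := abs_le.1 (hb2 t)
    linarith
  · rw [tendsto_atBot] at hS ⊢
    intro b
    obtain ⟨N, hN'⟩ := (hS ⌊2 * b - 1⌋).exists_forall_of_atBot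
    filter_upwards [eventually_le_atBot (N : ℝ)] with t ht
    have h1 : ((v ⌊t⌋).2 : ℝ) ≤ (⌊2 * b - 1⌋ : ℝ) := by
      exact_mod_cast hN' ⌊t⌋ (by have := (Int.floor_le t).trans ht; exact_mod_cast this)
    have h2 := Int.floor_le (2 * b - 1)
    have h3 := abs_le.1 (hb2 t)
    linarith
  · intro t
    obtain ⟨a, k, h1, h2, h3⟩ := hmix ⌊t⌋
    refine ⟨a, k, h1, h2, ?_, ?_⟩
    · have h4 := abs_le.1 (hb1 t)
      have h5 : ((v ⌊t⌋).1 : ℝ) = a.1 + a.1 + (dirs k).1 := by rw [h3]; simp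
      rw [abs_le]; constructor <;> simp only <;> linarith
    · have h4 := abs_le.1 (hb2 t)
      have h5 : ((v ⌊t⌋).2 : ℝ) = a.2 + a.2 + (dirs k).2 := by rw [h3]; simp
      rw [abs_le]; constructor <;> simp only <;> linarith

lemma h_bound (h : Plane → ℝ) (hc : Continuous h) (hT : ∀ x y, h (x + 1, y) = h (x, y) + 1) :
    ∃ g : ℝ → ℝ, Continuous g ∧ ∀ x y, |h (x, y) - x| ≤ g y := by
  obtain ⟨g, hg⟩ := exists_continuous_forall_mem_convex_of_local_const
    (t := fun y : ℝ => {c : ℝ | ∀ x, |h (x, y) - x| ≤ c}) (fun y => by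
      refine Set.OrdConnected.convex ⟨fun a ha b hb c hc x => (ha x).trans hc.1⟩) (fun y₀ => by
      obtain ⟨B, hB⟩ := periodic_bound (fun z => h z - z.1) (by fun_prop)
        (fun x y => by simp only [hT]; ring) (|y₀| + 1)
      refine ⟨B, ?_⟩
      filter_upwards [Metric.ball_mem_nhds y₀ one_pos] with y hy x
      refine hB (x, y) ?_
      rw [Metric.mem_ball, Real.dist_eq] at hy
      have := abs_sub_abs_le_abs_sub y y₀
      simp only; linarith)
  exact ⟨g, g.continuous, fun x y => hg y x⟩

lemma exists_modulus (k : Plane → ℝ) (hk : Continuous k) (G : ℝ → ℝ) (hG : Continuous G)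
    (h0 : ∀ x y, x ≤ -G y → k (x, y) = 0) (h1 : ∀ x y, G y ≤ x → k (x, y) = 1)
    (ε : ℝ) (hε : 0 < ε) :
    ∃ N : ℝ → ℝ, Continuous N ∧ ∀ y, 1 ≤ N y ∧ ∀ x x' y', |x - x'| ≤ 1 / N y →
      |y - y'| ≤ 1 / N y → |k (x, y) - k (x', y')| ≤ ε := by
  obtain ⟨g, hg⟩ := exists_continuous_forall_mem_convex_of_local_const
    (t := fun y : ℝ => {n : ℝ | 1 ≤ n ∧ ∀ x x' y', |x - x'| ≤ 1 / n →
      |y - y'| ≤ 1 / n → |k (x, y) - k (x', y')| ≤ ε}) (fun y => by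
      refine Set.OrdConnected.convex ⟨fun a ha b hb c hc => ⟨ha.1.trans hc.1, ?_⟩⟩
      intro x x' y' h2 h3
      have : 1 / c ≤ 1 / a := one_div_le_one_div_of_le (by linarith [ha.1]) hc.1
      exact ha.2 x x' y' (h2.trans this) (h3.trans this)) (fun y₀ => by
      obtain ⟨C, hC⟩ := (isCompact_Icc (a := y₀ - 2) (b := y₀ + 2)).bddAbove_image hG.continuousOn
      have hC' : ∀ y, y₀ - 2 ≤ y → y ≤ y₀ + 2 → G y ≤ C := fun y ha hb =>
        hC ⟨y, ⟨ha, hb⟩, rfl⟩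
      have hu := (((isCompact_Icc (a := -C - 2) (b := C + 2)).prod
        (isCompact_Icc (a := y₀ - 2) (b := y₀ + 2))).uniformContinuousOn_of_continuous
          hk.continuousOn)
      rw [Metric.uniformContinuousOn_iff] at hu
      obtain ⟨δ, hδ, hu⟩ := hu ε hε
      refine ⟨max 1 (2 / δ), ?_⟩
      filter_upwards [Metric.ball_mem_nhds y₀ one_pos] with y hy
      rw [Metric.mem_ball, Real.dist_eq, abs_lt] at hy
      refine ⟨le_max_left _ _, fun x x' y' h2 h3 => ?_⟩
      have e1 : 1 / max 1 (2 / δ) ≤ 1 := by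
        rw [div_le_one (by positivity)]; exact le_max_left _ _
      have e2 : 1 / max 1 (2 / δ) ≤ δ / 2 := by
        have := one_div_le_one_div_of_le (by positivity) (le_max_right 1 (2 / δ))
        rwa [one_div_div] at this
      have h2a := abs_le.1 (h2.trans e1)
      have h3a := abs_le.1 (h3.trans e1)
      by_cases hx1 : C + 1 < x
      · rw [h1 x y (by linarith [hC' y (by linarith) (by linarith)]),
          h1 x' y' (by linarith [hC' y' (by linarith) (by linarith)])]
        simp [hε.le]
      by_cases hx2 : x < -C - 1
      · rw [h0 x y (by linarith [hC' y (by linarith) (by linarith)]),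
          h0 x' y' (by linarith [hC' y' (by linarith) (by linarith)])]
        simp [hε.le]
      push Not at hx1 hx2
      have := hu (x, y) ⟨⟨by simp only; linarith, by simp only; linarith⟩,
          ⟨by simp only; linarith, by simp only; linarith⟩⟩ (x', y')
        ⟨⟨by simp only; linarith, by simp only; linarith⟩,
          ⟨by simp only; linarith, by simp only; linarith⟩⟩
        (by
          rw [Prod.dist_eq, max_lt_iff, Real.dist_eq, Real.dist_eq]
          exact ⟨by simp only; linarith, by simp only; linarith⟩)
      rw [Real.dist_eq] at this
      exact this.le)
  exact ⟨g, g.continuous, hg⟩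

lemma exists_scale (N : ℝ → ℝ) (hN : Continuous N) (hN1 : ∀ y, 1 ≤ N y) :
    ∃ b : ℝ ≃o ℝ, ∀ v v', |v - v'| ≤ 1 → ∃ ξ, |b v - ξ| ≤ 1 / N ξ ∧ |b v' - ξ| ≤ 1 / N ξ := by
  let M : ℝ → ℝ := fun y => ∫ t in (0:ℝ)..y, N t
  have hd : ∀ y, HasDerivAt M (N y) y := fun y =>
    (hN.integral_hasStrictDerivAt 0 y).hasDerivAt
  have hc : Continuous M := continuous_iff_continuousAt.2 fun y => (hd y).continuousAt
  have hslope : ∀ a b, a < b → ∃ c ∈ Ioo a b, N c * (b - a) = M b - M a := by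
    intro a b hab
    obtain ⟨c, hc1, hc2⟩ := exists_hasDerivAt_eq_slope M N hab hc.continuousOn (fun x _ => hd x)
    refine ⟨c, hc1, ?_⟩
    rw [hc2, div_mul_cancel₀]; linarith
  have hexp : ∀ a b, a < b → b - a ≤ M b - M a := by
    intro a b hab
    obtain ⟨c, _, h⟩ := hslope a b hab
    rw [← h]
    nlinarith [hN1 c]
  have hmono : StrictMono M := fun a b hab => by linarith [hexp a b hab]
  have hM0 : M 0 = 0 := by simp [M]
  have htop : Tendsto M atTop atTop := by
    refine tendsto_atTop_mono' _ ?_ tendsto_id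
    filter_upwards [eventually_gt_atTop 0] with y hy
    have := hexp 0 y hy
    simp only [id]; linarith
  have hbot : Tendsto M atBot atBot := by
    refine tendsto_atBot_mono' _ ?_ tendsto_id
    filter_upwards [eventually_lt_atBot 0] with y hy
    have := hexp y 0 hy
    simp only [id]; linarith
  have hsurj : Function.Surjective M := hc.surjective htop hbot
  let e := StrictMono.orderIsoOfSurjective M hmono hsurj
  have he : ∀ y, e y = M y := fun y => rfl
  refine ⟨e.symm, ?_⟩
  have main : ∀ v v', v < v' → |v - v'| ≤ 1 →
      ∃ ξ, |e.symm v - ξ| ≤ 1 / N ξ ∧ |e.symm v' - ξ| ≤ 1 / N ξ := by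
    intro v v' hlt hv
    have hlt' := e.symm.strictMono hlt
    obtain ⟨c, hc1, hc2⟩ := hslope _ _ hlt'
    rw [← he, ← he, e.apply_symm_apply, e.apply_symm_apply] at hc2
    have hNp : 0 < N c := by linarith [hN1 c]
    have hle : e.symm v' - e.symm v ≤ 1 / N c := by
      rw [le_div_iff₀ hNp]
      have := (abs_le.1 hv).1
      linarith
    refine ⟨c, ?_, ?_⟩
    · rw [abs_le]; constructor <;> linarith [hc1.1, hc1.2]
    · rw [abs_le]; constructor <;> linarith [hc1.1, hc1.2]
  intro v v' hv
  rcases lt_trichotomy v v' with h | h | h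
  · exact main v v' h hv
  · subst h
    refine ⟨e.symm v, ?_⟩
    have : 0 < N (e.symm v) := by linarith [hN1 (e.symm v)]
    simp [this.le]
  · obtain ⟨ξ, h1, h2⟩ := main v' v h (by rwa [abs_sub_comm])
    exact ⟨ξ, h2, h1⟩

lemma exists_rescale (k : Plane → ℝ) (hk : Continuous k) (G : ℝ → ℝ) (hG : Continuous G)
    (h0 : ∀ x y, x ≤ -G y → k (x, y) = 0) (h1 : ∀ x y, G y ≤ x → k (x, y) = 1) :
    ∃ (N : ℝ → ℝ) (b : ℝ ≃o ℝ), Continuous N ∧ (∀ y, 1 ≤ N y) ∧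
      ∀ u v u' v', |u - u'| ≤ 1 → |v - v'| ≤ 1 →
        |k (u / N (b v), b v) - k (u' / N (b v'), b v')| ≤ 1 / 10 := by
  obtain ⟨N, hN, hN1⟩ := exists_modulus k hk G hG h0 h1 (1 / 30) (by norm_num)
  have hNp : ∀ y, 0 < N y := fun y => by linarith [(hN1 y).1]
  let k1 : Plane → ℝ := fun p => k (p.1 / N p.2, p.2)
  have hk1 : Continuous k1 := by
    refine hk.comp ((continuous_fst.div (hN.comp continuous_snd) (fun p => (hNp p.2).ne')).prodMk
      continuous_snd)
  obtain ⟨N2, hN2, hN21⟩ := exists_modulus k1 hk1 (fun y => G y * N y) (hG.mul hN)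
    (fun x y hx => h0 _ _ (by rw [div_le_iff₀ (hNp y)]; linarith))
    (fun x y hx => h1 _ _ (by rw [le_div_iff₀ (hNp y)]; linarith)) (1 / 30) (by norm_num)
  obtain ⟨b, hb⟩ := exists_scale N2 hN2 (fun y => (hN21 y).1)
  refine ⟨N, b, hN, fun y => (hN1 y).1, fun u v u' v' hu hv => ?_⟩
  obtain ⟨ξ, hξ1, hξ2⟩ := hb v v' hv
  have hp : 0 ≤ 1 / N2 ξ := (abs_nonneg _).trans hξ1
  have e1 : |k1 (u, ξ) - k1 (u, b v)| ≤ 1 / 30 :=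
    (hN21 ξ).2 u u (b v) (by simpa using hp) (by rwa [abs_sub_comm])
  have e2 : |k1 (u, ξ) - k1 (u, b v')| ≤ 1 / 30 :=
    (hN21 ξ).2 u u (b v') (by simpa using hp) (by rwa [abs_sub_comm])
  have e3 : |k1 (u, b v') - k1 (u', b v')| ≤ 1 / 30 := by
    have hq := hNp (b v')
    refine (hN1 (b v')).2 _ _ _ ?_ (by simpa using hq.le)
    simp only
    rw [← sub_div, abs_div, abs_of_pos hq]
    gcongr
  change |k1 (u, b v) - k1 (u', b v')| ≤ 1 / 10
  rw [abs_le] at e1 e2 e3 ⊢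
  constructor <;> linarith

lemma east_preconn (c : ℝ → ℝ) (hc : Continuous c) :
    IsPreconnected {p : Plane | c p.2 < p.1} := by
  have : {p : Plane | c p.2 < p.1} =
      (fun q : ℝ × ℝ => ((c q.2 + q.1, q.2) : Plane)) '' (Ioi 0 ×ˢ univ) := by
    ext ⟨x, y⟩
    constructor
    · intro h
      exact ⟨(x - c y, y), ⟨by simpa using h, mem_univ _⟩, by simp⟩
    · rintro ⟨⟨s, t⟩, ⟨hs, -⟩, h⟩
      simp only [Prod.mk.injEq] at h
      obtain ⟨rfl, rfl⟩ := h
      simpa using hs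
  rw [this]
  exact (isPreconnected_Ioi.prod isPreconnected_univ).image _ (by fun_prop)

lemma west_preconn (c : ℝ → ℝ) (hc : Continuous c) :
    IsPreconnected {p : Plane | p.1 < c p.2} := by
  have : {p : Plane | p.1 < c p.2} =
      (fun q : ℝ × ℝ => ((c q.2 + q.1, q.2) : Plane)) '' (Iio 0 ×ˢ univ) := by
    ext ⟨x, y⟩
    constructor
    · intro h
      exact ⟨(x - c y, y), ⟨by simpa using h, mem_univ _⟩, by simp⟩
    · rintro ⟨⟨s, t⟩, ⟨hs, -⟩, h⟩
      simp only [Prod.mk.injEq] at h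
      obtain ⟨rfl, rfl⟩ := h
      simpa using hs
  rw [this]
  exact (isPreconnected_Iio.prod isPreconnected_univ).image _ (by fun_prop)

lemma exists_line (h : Plane → ℝ) (hc : Continuous h) (g : ℝ → ℝ) (hgc : Continuous g)
    (hg : ∀ x y, |h (x, y) - x| ≤ g y) :
    ∃ Γ : ℝ → Plane, Continuous Γ ∧ Function.Injective Γ ∧
      Tendsto (fun t => (Γ t).2) atTop atTop ∧ Tendsto (fun t => (Γ t).2) atBot atBot ∧
      (∀ t, 0 < h (Γ t) ∧ h (Γ t) < 1) ∧
      ∃ C : Set Plane, IsPreconnected C ∧ (∀ p ∈ C, 0 < h p) ∧ (∃ t, Γ t ∈ C) ∧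
        ∀ p : Plane, g p.2 + 1 < p.1 → p ∈ C := by
  have hlo : ∀ x y, x - g y ≤ h (x, y) := fun x y => by have := abs_le.1 (hg x y); linarith
  have hhi : ∀ x y, h (x, y) ≤ x + g y := fun x y => by have := abs_le.1 (hg x y); linarith
  let k : Plane → ℝ := fun p => max 0 (min 1 (h p))
  have hk : Continuous k := by fun_prop
  obtain ⟨N, b, hN, hN1, hosc⟩ := exists_rescale k hk (fun y => g y + 1) (by fun_prop)
    (fun x y hx => by
      have : h (x, y) ≤ 0 := by have := hhi x y; linarith
      exact max_eq_left ((min_le_right _ _).trans this))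
    (fun x y hx => by
      have : 1 ≤ h (x, y) := by have := hlo x y; linarith
      simp only [k, min_eq_left this]; norm_num)
  have hNp : ∀ y, 0 < N y := fun y => by linarith [hN1 y]
  have hbc : Continuous b := b.continuous
  let Ψ : Plane → Plane := fun p => (p.1 / N (b p.2), b p.2)
  have hΨ : Continuous Ψ :=
    (continuous_fst.div (hN.comp (hbc.comp continuous_snd)) (fun p => (hNp _).ne')).prodMk
      (hbc.comp continuous_snd)
  have hΨi : Function.Injective Ψ := by
    rintro ⟨x, y⟩ ⟨x', y'⟩ he
    have h2 : y = y' := b.injective (congrArg Prod.snd he)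
    subst h2
    have h1 : x / N (b y) = x' / N (b y) := congrArg Prod.fst he
    rw [div_left_inj' (hNp _).ne'] at h1
    rw [h1]
  let W : Set Plane := {p : Plane | g p.2 + 1 < p.1}
  have hW : IsPreconnected W := east_preconn (fun y => g y + 1) (by fun_prop)
  have hWh : ∀ p ∈ W, 1 < h p := fun p hp => by
    have := hlo p.1 p.2
    have hp' : g p.2 + 1 < p.1 := hp
    change p.1 - g p.2 ≤ h p at this
    linarith
  let S : Set Plane := {p | 2 / 5 < h p}
  let e0 : Plane := (g 0 + 2, 0)
  let E := connectedComponentIn S e0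
  have hWS : W ⊆ S := fun p hp => by
    have := hWh p hp
    show 2 / 5 < h p
    linarith
  have he0 : e0 ∈ W := by show g 0 + 1 < g 0 + 2; linarith
  have hWE : W ⊆ E := hW.subset_connectedComponentIn he0 hWS
  have hES : E ⊆ S := connectedComponentIn_subset _ _
  let A : ℤ × ℤ → Prop := fun v => Ψ ((v.1 : ℝ), (v.2 : ℝ)) ∈ E
  have hA : GoodRows A := by
    intro j
    have hn := hNp (b j)
    have hceil := Int.le_ceil ((|g (b j)| + 2) * N (b j))
    have hab := le_abs_self (g (b j))
    have hab' := abs_nonneg (g (b j))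
    refine ⟨⌈(|g (b j)| + 2) * N (b j)⌉, fun i hi => hWE ?_, fun i hi hAi => ?_⟩
    · have hi' : ((⌈(|g (b j)| + 2) * N (b j)⌉ : ℤ) : ℝ) ≤ i := by exact_mod_cast hi
      show g (b j) + 1 < (i : ℝ) / N (b j)
      rw [lt_div_iff₀ hn]
      have : (g (b j) + 1) * N (b j) < (|g (b j)| + 2) * N (b j) := by
        apply mul_lt_mul_of_pos_right _ hn; linarith
      linarith
    · have hi' : (i : ℝ) ≤ -((⌈(|g (b j)| + 2) * N (b j)⌉ : ℤ) : ℝ) := by exact_mod_cast hi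
      have h1 : 2 / 5 < h ((i : ℝ) / N (b j), b j) := hES hAi
      have h2 := hhi ((i : ℝ) / N (b j)) (b j)
      have h3 : (i : ℝ) / N (b j) ≤ -(|g (b j)| + 2) := by
        rw [div_le_iff₀ hn]; linarith
      linarith
  obtain ⟨G, hGc, hGi, hGN, hGS, hGb⟩ := exists_grid_line hA
  have hkey : ∀ t, ∃ B : Set Plane, IsPreconnected B ∧ Ψ (G t) ∈ B ∧ (∃ p ∈ B, p ∈ E) ∧
      ∀ p ∈ B, 0 < h p ∧ h p < 1 := by
    intro t
    obtain ⟨a, d, ha, hb', h1, h2⟩ := hGb t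
    have hd := dirs_bound d
    have d1 : (-1 : ℝ) ≤ (dirs d).1 := by exact_mod_cast hd.2.2.1
    have d2 : ((dirs d).1 : ℝ) ≤ 1 := by exact_mod_cast hd.2.2.2
    have d3 : (-1 : ℝ) ≤ (dirs d).2 := by exact_mod_cast hd.1
    have d4 : ((dirs d).2 : ℝ) ≤ 1 := by exact_mod_cast hd.2.1
    let c1 : ℝ := a.1 + ((dirs d).1 : ℝ) / 2
    let c2 : ℝ := a.2 + ((dirs d).2 : ℝ) / 2
    let Q : Set Plane := Icc (c1 - 1 / 2) (c1 + 1 / 2) ×ˢ Icc (c2 - 1 / 2) (c2 + 1 / 2)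
    have hQ : IsPreconnected Q := isPreconnected_Icc.prod isPreconnected_Icc
    have hQi : IsPreconnected (Ψ '' Q) := hQ.image _ hΨ.continuousOn
    have hGQ : G t ∈ Q := by
      have := abs_le.1 h1
      have := abs_le.1 h2
      exact ⟨⟨by simp only [c1]; linarith, by simp only [c1]; linarith⟩,
        ⟨by simp only [c2]; linarith, by simp only [c2]; linarith⟩⟩
    have haQ : (((a.1 : ℝ), (a.2 : ℝ)) : Plane) ∈ Q :=
      ⟨⟨by simp only [c1]; linarith, by simp only [c1]; linarith⟩,
        ⟨by simp only [c2]; linarith, by simp only [c2]; linarith⟩⟩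
    have hbQ : ((((a + dirs d).1 : ℤ) : ℝ), (((a + dirs d).2 : ℤ) : ℝ)) ∈ Q := by
      simp only [Prod.fst_add, Prod.snd_add]
      push_cast
      exact ⟨⟨by simp only [c1]; linarith, by simp only [c1]; linarith⟩,
        ⟨by simp only [c2]; linarith, by simp only [c2]; linarith⟩⟩
    have hoscQ : ∀ p ∈ Q, ∀ p' ∈ Q, |k (Ψ p) - k (Ψ p')| ≤ 1 / 10 := by
      rintro ⟨u, v⟩ ⟨⟨p1, p2⟩, ⟨p3, p4⟩⟩ ⟨u', v'⟩ ⟨⟨q1, q2⟩, ⟨q3, q4⟩⟩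
      simp only at p1 p2 p3 p4 q1 q2 q3 q4
      refine hosc u v u' v' ?_ ?_ <;> rw [abs_le] <;> constructor <;> linarith
    obtain ⟨p0, hp0, hp0'⟩ : ∃ p ∈ Q, h (Ψ p) ≤ 2 / 5 := by
      by_contra hcon
      push Not at hcon
      apply hb'
      have hs : Ψ '' Q ⊆ S := by rintro _ ⟨p, hp, rfl⟩; exact hcon p hp
      have hU : IsPreconnected (E ∪ Ψ '' Q) :=
        IsPreconnected.union _ ha ⟨_, haQ, rfl⟩ isPreconnected_connectedComponentIn hQi
      exact (hU.subset_connectedComponentIn (Or.inl (hWE he0)) (union_subset hES hs))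
        (Or.inr ⟨_, hbQ, rfl⟩)
    have ha' : 2 / 5 < h (Ψ ((a.1 : ℝ), (a.2 : ℝ))) := hES ha
    have hkp0 : k (Ψ p0) ≤ 2 / 5 := max_le (by norm_num) ((min_le_right _ _).trans hp0')
    have hka : 2 / 5 ≤ k (Ψ ((a.1 : ℝ), (a.2 : ℝ))) :=
      le_max_of_le_right (le_min (by norm_num) ha'.le)
    refine ⟨Ψ '' Q, hQi, ⟨_, hGQ, rfl⟩, ⟨_, ⟨_, haQ, rfl⟩, ha⟩, ?_⟩
    rintro _ ⟨p, hp, rfl⟩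
    have e1 := abs_le.1 (hoscQ p hp _ hp0)
    have e2 := abs_le.1 (hoscQ p hp _ haQ)
    have e3 : 0 < k (Ψ p) := by linarith
    have e4 : k (Ψ p) < 1 := by linarith
    simp only [k, lt_max_iff, lt_min_iff, max_lt_iff, min_lt_iff] at e3 e4
    constructor
    · rcases e3 with e | e
      · exact absurd e (lt_irrefl _)
      · exact e.2
    · rcases e4.2 with e | e
      · exact absurd e (lt_irrefl _)
      · exact e
  refine ⟨fun t => Ψ (G t), hΨ.comp hGc, hΨi.comp hGi, b.tendsto_atTop.comp hGN,
    b.tendsto_atBot.comp hGS, fun t => ?_, ?_⟩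
  · obtain ⟨B, _, h2, _, h4⟩ := hkey t
    exact h4 _ h2
  · obtain ⟨B, h1, h2, ⟨p, h3, h3'⟩, h4⟩ := hkey 0
    refine ⟨E ∪ B, IsPreconnected.union p h3' h3 isPreconnected_connectedComponentIn h1, ?_,
      ⟨0, Or.inr h2⟩, fun p hp => Or.inl (hWE hp)⟩
    rintro p (hp | hp)
    · have : 2 / 5 < h p := hES hp
      linarith
    · exact (h4 p hp).1

lemma Lset_eq (Γ : Set Plane) (s : ℝ) (hs : ∀ x ≤ s, ((x, 0) : Plane) ∉ Γ) :
    Lset Γ = connectedComponentIn Γᶜ ((s, 0) : Plane) := by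
  have hray : IsPreconnected (Iic s ×ˢ ({0} : Set ℝ)) :=
    isPreconnected_Iic.prod isPreconnected_singleton
  have hsub : Iic s ×ˢ ({0} : Set ℝ) ⊆ Γᶜ := by
    rintro ⟨x, y⟩ ⟨hx, hy⟩
    obtain rfl : y = 0 := hy
    exact hs x hx
  have heq : ∀ x ≤ s, connectedComponentIn Γᶜ ((s, 0) : Plane) =
      connectedComponentIn Γᶜ ((x, 0) : Plane) := fun x hx =>
    connectedComponentIn_eq (hray.subset_connectedComponentIn (mk_mem_prod self_mem_Iic (mem_singleton 0))
      hsub (mk_mem_prod hx (mem_singleton 0)))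
  ext p
  constructor
  · rintro ⟨r, hr⟩
    have := hr (min r s) (min_le_left _ _)
    rwa [← heq _ (min_le_right _ _)] at this
  · intro hp
    exact ⟨s, fun x hx => by rwa [← heq x hx]⟩

lemma lineLT_of (Γ₁ Γ₂ : Set Plane) (hcl : IsClosed Γ₁) (hd : Disjoint Γ₁ Γ₂)
    (hpre : IsPreconnected Γ₂) (s : ℝ) (hs1 : ∀ x ≤ s, ((x, 0) : Plane) ∉ Γ₁)
    (hs2 : ∀ x ≤ s, ((x, 0) : Plane) ∉ Γ₂) (e z : Plane) (hz : z ∈ Γ₂)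
    (hze : z ∈ connectedComponentIn Γ₁ᶜ e)
    (hsep : e ∉ connectedComponentIn Γ₁ᶜ ((s, 0) : Plane)) : lineLT Γ₁ Γ₂ := by
  unfold lineLT
  rw [Lset_eq Γ₁ s hs1, Lset_eq Γ₂ s hs2]
  have h12 : Γ₂ ⊆ Γ₁ᶜ := fun p hp hp' => hd.le_bot ⟨hp', hp⟩
  have he : e ∈ Γ₁ᶜ := by
    by_contra hcon
    rw [connectedComponentIn_eq_empty hcon] at hze
    exact hze
  have hΓ₂ : Γ₂ ⊆ connectedComponentIn Γ₁ᶜ e := by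
    rw [connectedComponentIn_eq hze]
    exact hpre.subset_connectedComponentIn hz h12
  have hdis : ∀ p ∈ Γ₂, p ∉ connectedComponentIn Γ₁ᶜ ((s, 0) : Plane) := by
    intro p hp hp'
    apply hsep
    rw [connectedComponentIn_eq hp', ← connectedComponentIn_eq (hΓ₂ hp)]
    exact mem_connectedComponentIn he
  have hsm : ((s, 0) : Plane) ∈ connectedComponentIn Γ₁ᶜ ((s, 0) : Plane) :=
    mem_connectedComponentIn (hs1 s le_rfl)
  refine IsPreconnected.subset_connectedComponentIn isPreconnected_connectedComponentIn.closure
    (subset_closure hsm) ?_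
  intro p hp hp2
  have hop : IsOpen (connectedComponentIn Γ₁ᶜ p) := hcl.isOpen_compl.connectedComponentIn
  have hpm : p ∈ connectedComponentIn Γ₁ᶜ p := mem_connectedComponentIn (h12 hp2)
  obtain ⟨w, hw1, hw2⟩ := mem_closure_iff.1 hp _ hop hpm
  apply hdis p hp2
  rw [connectedComponentIn_eq hw2, ← connectedComponentIn_eq hw1]
  exact hpm

lemma sep_gen (Γ : ℝ → Plane) (hΓ : Continuous Γ) (hN : Tendsto (fun t => (Γ t).2) atTop atTop)
    (hS : Tendsto (fun t => (Γ t).2) atBot atBot) (Φ : Plane ≃ₜ Plane) (U : Set Plane)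
    (hUo : IsOpen U) (hUc : IsConnected U) (hd : ∀ p ∈ U, p ∉ Φ '' range Γ)
    (s₀ s₁ : ℝ) (hW : ∀ x ≤ s₀, Φ (x, 0) ∈ U) (hE : ∀ x ≥ s₁, Φ (x, 0) ∈ U) : False := by
  have hp : IsPathConnected U := (hUo.isConnected_iff_isPathConnected).1 hUc
  have hp' : IsPathConnected (Φ.symm '' U) := hp.image Φ.symm.continuous
  refine line_separates Γ hΓ hN hS _ hp' ?_ s₀ s₁ (fun x hx => ⟨_, hW x hx, Φ.symm_apply_apply _⟩)
    (fun x hx => ⟨_, hE x hx, Φ.symm_apply_apply _⟩)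
  rw [Set.disjoint_left]
  rintro _ ⟨p, hpU, rfl⟩ hr
  exact hd p hpU ⟨_, hr, Φ.apply_symm_apply p⟩

lemma far_bound (Φ : Plane ≃ₜ Plane) (hΦ : CommT Φ) (g : ℝ → ℝ) (hg : Continuous g) :
    ∃ B, ∀ x, (Φ (x, 0)).1 + g (Φ (x, 0)).2 ≤ x + B ∧ x - B ≤ (Φ (x, 0)).1 - g (Φ (x, 0)).2 := by
  obtain ⟨B1, h1⟩ := periodic_bound (fun z => (Φ z).1 + g (Φ z).2 - z.1) (by fun_prop)
    (fun x y => by simp only [hΦ x y]; ring) 0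
  obtain ⟨B2, h2⟩ := periodic_bound (fun z => (Φ z).1 - g (Φ z).2 - z.1) (by fun_prop)
    (fun x y => by simp only [hΦ x y]; ring) 0
  refine ⟨max B1 B2, fun x => ?_⟩
  have e1 := abs_le.1 (h1 (x, 0) (by simp))
  have e2 := abs_le.1 (h2 (x, 0) (by simp))
  have := le_max_left B1 B2
  have := le_max_right B1 B2
  simp only at e1 e2
  constructor <;> linarith

lemma lt_general (h : Plane → ℝ) (g : ℝ → ℝ) (hgc : Continuous g)
    (hg : ∀ x y, |h (x, y) - x| ≤ g y) (Γ : ℝ → Plane) (hΓ : Continuous Γ)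
    (hcl : IsClosed (range Γ))
    (hN : Tendsto (fun t => (Γ t).2) atTop atTop) (hS : Tendsto (fun t => (Γ t).2) atBot atBot)
    (hΓh : ∀ t, 0 < h (Γ t) ∧ h (Γ t) < 1) (C : Set Plane) (hC : IsPreconnected C)
    (hCh : ∀ p ∈ C, 0 < h p) (hCΓ : ∃ t, Γ t ∈ C) (hCE : ∀ p : Plane, g p.2 + 1 < p.1 → p ∈ C)
    (Φ Θ : Plane ≃ₜ Plane) (hΦT : CommT Φ) (hΘT : CommT Θ) (c K : ℝ)
    (hΦ : ∀ p, h p < 1 → h (Φ p) < c) (hΘ : ∀ p, 0 < h p → c < h (Θ p))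
    (hΦK : ∀ p, 0 < h p → -K < h (Φ p)) :
    lineLT (Φ '' range Γ) (Θ '' range Γ) := by
  have hlo : ∀ x y, x - g y ≤ h (x, y) := fun x y => by have := abs_le.1 (hg x y); linarith
  have hhi : ∀ x y, h (x, y) ≤ x + g y := fun x y => by have := abs_le.1 (hg x y); linarith
  have hR1 := le_abs_self K
  have hR2 := le_abs_self c
  have hR3 := neg_abs_le c
  have hR4 := abs_nonneg K
  have hR5 := abs_nonneg c
  obtain ⟨R, hR⟩ : ∃ R, R = |K| + |c| + 1 := ⟨_, rfl⟩
  let W : Set Plane := {p : Plane | p.1 < -g p.2 - R}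
  let E : Set Plane := {p : Plane | g p.2 + R < p.1}
  have hWm : ∀ p, p ∈ W ↔ p.1 < -g p.2 - R := fun p => Iff.rfl
  have hEm : ∀ p, p ∈ E ↔ g p.2 + R < p.1 := fun p => Iff.rfl
  have hW : IsPreconnected W := west_preconn (fun y => -g y - R) (by fun_prop)
  have hE : IsPreconnected E := east_preconn (fun y => g y + R) (by fun_prop)
  have hWh : ∀ p ∈ W, h p < -R := fun p hp => by
    have hp' : p.1 < -g p.2 - R := hp
    have := hhi p.1 p.2
    change h p ≤ p.1 + g p.2 at this
    linarith
  have hEh : ∀ p ∈ E, R < h p := fun p hp => by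
    have hp' : g p.2 + R < p.1 := hp
    have := hlo p.1 p.2
    change p.1 - g p.2 ≤ h p at this
    linarith
  have h1 : ∀ p ∈ Φ '' range Γ, -K < h p ∧ h p < c := by
    rintro _ ⟨_, ⟨t, rfl⟩, rfl⟩
    exact ⟨hΦK _ (hΓh t).1, hΦ _ (hΓh t).2⟩
  have h2 : ∀ p ∈ Θ '' range Γ, c < h p := by
    rintro _ ⟨_, ⟨t, rfl⟩, rfl⟩
    exact hΘ _ (hΓh t).1
  have hW1 : W ⊆ (Φ '' range Γ)ᶜ := fun p hp hp' => by
    have := hWh p hp; have := (h1 p hp').1; linarith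
  have hE1 : E ⊆ (Φ '' range Γ)ᶜ := fun p hp hp' => by
    have := hEh p hp; have := (h1 p hp').2; linarith
  have hwm : ∀ x ≤ -g 0 - R - 1, ((x, 0) : Plane) ∈ W := fun x hx => by
    show x < -g 0 - R
    linarith
  obtain ⟨B, hB⟩ := far_bound Φ hΦT g hgc
  obtain ⟨B', hB'⟩ := far_bound Θ hΘT g hgc
  have hem : ((g 0 + R + 1, 0) : Plane) ∈ E := by
    show g 0 + R < g 0 + R + 1
    linarith
  have hcl1 : IsClosed (Φ '' range Γ) := Φ.isClosedMap _ hcl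
  obtain ⟨t, ht⟩ := hCΓ
  -- join to the far east
  have hjoin : ∃ x : ℝ, ((x, 0) : Plane) ∈ C ∧ Θ (x, 0) ∈ E := by
    refine ⟨max (g 0 + 2) (B' + R + 1), hCE _ ?_, ?_⟩
    · have := le_max_left (g 0 + 2) (B' + R + 1)
      show g 0 + 1 < max (g 0 + 2) (B' + R + 1)
      linarith
    · have := le_max_right (g 0 + 2) (B' + R + 1)
      have h3 := (hB' (max (g 0 + 2) (B' + R + 1))).2
      rw [hEm]
      linarith
  obtain ⟨x, hx1, hx2⟩ := hjoin
  have hU : IsPreconnected (E ∪ Θ '' C) :=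
    IsPreconnected.union _ hx2 ⟨_, hx1, rfl⟩ hE (hC.image _ Θ.continuous.continuousOn)
  refine lineLT_of _ _ hcl1 ?_ ((isPreconnected_range hΓ).image _ Θ.continuous.continuousOn)
    (-g 0 - R - 1) (fun x hx => hW1 (hwm x hx)) (fun x hx hx' => ?_) (g 0 + R + 1, 0) (Θ (Γ t))
    ⟨_, ⟨t, rfl⟩, rfl⟩ ?_ ?_
  · rw [Set.disjoint_left]
    intro p hp hp'
    have := (h1 p hp).2
    have := h2 p hp'
    linarith
  · have := h2 _ hx'
    have := hWh _ (hwm x hx)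
    linarith
  · refine hU.subset_connectedComponentIn (Or.inl hem) (union_subset hE1 ?_) (Or.inr ⟨_, ht, rfl⟩)
    rintro _ ⟨p, hp, rfl⟩ hp'
    have := (h1 _ hp').2
    have := hΘ p (hCh p hp)
    linarith
  · intro hsep
    have hwm0 := hwm _ le_rfl
    have hWU := hW.subset_connectedComponentIn hwm0 hW1
    have hEU := hE.subset_connectedComponentIn hem hE1
    rw [← connectedComponentIn_eq hsep] at hEU
    refine sep_gen Γ hΓ hN hS Φ _ (hcl1.isOpen_compl.connectedComponentIn)
      (isConnected_connectedComponentIn_iff.2 (hW1 hwm0))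
      (fun p hp => connectedComponentIn_subset _ _ hp) (-B - R - 1) (B + R + 1)
      (fun x hx => hWU ?_) (fun x hx => hEU ?_)
    · have := (hB x).1
      rw [hWm]
      linarith
    · have := (hB x).2
      rw [hEm]
      linarith

lemma proper_of_tendsto {X : Type*} [TopologicalSpace X] [T2Space X] [WeaklyLocallyCompactSpace X]
    (γ : ℝ → X × ℝ) (hγ : Continuous γ)
    (hN : Tendsto (fun t => (γ t).2) atTop atTop) (hS : Tendsto (fun t => (γ t).2) atBot atBot) :
    IsProperMap γ := by
  rw [isProperMap_iff_isCompact_preimage]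
  refine ⟨hγ, fun K hK => ?_⟩
  obtain ⟨M, hM⟩ := (hK.image continuous_snd).bddAbove
  obtain ⟨m, hm⟩ := (hK.image continuous_snd).bddBelow
  obtain ⟨a, ha⟩ := (hN.eventually_gt_atTop M).exists_forall_of_atTop
  obtain ⟨b, hb⟩ := (hS.eventually_lt_atBot m).exists_forall_of_atBot
  refine (isCompact_Icc (a := b) (b := a)).of_isClosed_subset (hK.isClosed.preimage hγ) ?_
  intro t ht
  have h1 : (γ t).2 ≤ M := hM ⟨_, ht, rfl⟩
  have h2 : m ≤ (γ t).2 := hm ⟨_, ht, rfl⟩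
  constructor
  · by_contra hcon
    have := hb t (by linarith)
    linarith
  · by_contra hcon
    have := ha t (by linarith)
    linarith

/-- Horizontal translation as a homeomorphism. -/
def trH (k : ℤ) : Plane ≃ₜ Plane := Homeomorph.addRight ((k : ℝ), (0 : ℝ))

lemma trH_eq (k : ℤ) : ⇑(trH k) = Tr k := by
  funext p
  obtain ⟨x, y⟩ := p
  simp [trH, Tr]

lemma trH_comm (k : ℤ) : CommT (trH k) := by
  intro x y
  rw [trH_eq]
  simp only [Tr, Prod.mk.injEq]
  exact ⟨by ring, trivial⟩

/-- Lemma 5.4: if `Rot_weak(F) ⊆ [-q+2, q-2]` for some `q ≥ 2`, then there exists an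
oriented essential line `γ = prj ∘ Γ` in 𝔸 joining S to N, lifting to an essential line
`Γ` in ℝ² with `T^{-q}(Γ) < F(Γ) < T^{q}(Γ)`. -/
theorem bounded_weak_rotation_set_line
    (f : Ann ≃ₜ Ann) (F : Plane ≃ₜ Plane)
    (hiso : IsotopicToId f) (hint : IntersectionProperty f) (hlift : IsLift f F)
    (q : ℕ) (hq : 2 ≤ q)
    (hsub : RotWeak ⇑F ⊆ Set.Icc (((-(q : ℝ) + 2 : ℝ)) : EReal) ((((q : ℝ) - 2 : ℝ)) : EReal)) :
    ∃ Γ : ℝ → Plane, IsEssLinePlane Γ ∧ IsEssLineAnnSN (prj ∘ Γ) ∧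
      lineLT (Tr (-(q : ℤ)) '' Set.range Γ) (⇑F '' Set.range Γ) ∧
      lineLT (⇑F '' Set.range Γ) (Tr (q : ℤ) '' Set.range Γ) := by
  have hF : CommT F := fun x y => lift_comm f F hiso hlift x y
  have hq1 : (1 : ℝ) ≤ q := by exact_mod_cast (by omega : 1 ≤ q)
  obtain ⟨h, hc, hT, hFh⟩ := exists_h F hF q hq1 hsub
  obtain ⟨g, hgc, hg⟩ := h_bound h hc hT
  obtain ⟨Γ, hΓ, hΓi, hN, hS, hΓh, C, hC, hCh, hCΓ, hCE⟩ := exists_line h hc g hgc hg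
  have hTn : ∀ (n : ℤ) x y, h (x + n, y) = h (x, y) + n := by
    intro n x y
    have hper : Function.Periodic (fun x => h (x, y) - x) 1 := fun x => by
      simp only [hT]; ring
    have := hper.int_mul n x
    simp only [mul_one] at this
    linarith
  have hTr : ∀ (n : ℤ) p, h (Tr n p) = h p + n := fun n p => hTn n p.1 p.2
  have hp1 : IsProperMap Γ := proper_of_tendsto Γ hΓ hN hS
  have hprj : Continuous prj :=
    ((AddCircle.continuous_mk' (1 : ℝ)).comp continuous_fst).prodMk continuous_snd
  refine ⟨Γ, ⟨hΓ, hΓi, hp1, hN, hS⟩, ⟨hprj.comp hΓ, ?_, ?_, hN, hS⟩, ?_, ?_⟩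
  · intro s t hst
    have e1 : ((Γ s).1 : AddCircle (1 : ℝ)) = ((Γ t).1 : AddCircle (1 : ℝ)) := congrArg Prod.fst hst
    have e2 : (Γ s).2 = (Γ t).2 := congrArg (fun a : Ann => a.2) hst
    obtain ⟨n, hn⟩ := (QuotientAddGroup.eq_iff_sub_mem.1 e1)
    have hn' : (n : ℝ) = (Γ s).1 - (Γ t).1 := by simpa using hn
    have e3 : Γ s = ((Γ t).1 + n, (Γ t).2) := by
      ext
      · simp only; linarith
      · exact e2
    have e4 := hTn n (Γ t).1 (Γ t).2
    rw [← e3] at e4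
    change h (Γ s) = h (Γ t) + n at e4
    have hs := hΓh s
    have ht := hΓh t
    have n1 : (n : ℝ) < 1 := by linarith
    have n2 : (-1 : ℝ) < n := by linarith
    have n1' : n < 1 := by exact_mod_cast n1
    have n2' : -1 < n := by exact_mod_cast n2
    have n0 : n = 0 := by omega
    apply hΓi
    rw [e3, n0]; simp
  · exact proper_of_tendsto (prj ∘ Γ) (hprj.comp hΓ) hN hS
  · rw [← trH_eq]
    refine lt_general h g hgc hg Γ hΓ hp1.isClosedMap.isClosed_range hN hS hΓh C hC hCh hCΓ hCE
      (trH (-(q : ℤ))) F (trH_comm _) hF (1 - q) q (fun p hp => ?_) (fun p hp => ?_)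
      (fun p hp => ?_)
    · rw [trH_eq, hTr]; push_cast; linarith
    · have := abs_le.1 (hFh p); linarith
    · rw [trH_eq, hTr]; push_cast; linarith
  · rw [← trH_eq]
    refine lt_general h g hgc hg Γ hΓ hp1.isClosedMap.isClosed_range hN hS hΓh C hC hCh hCΓ hCE
      F (trH (q : ℤ)) hF (trH_comm _) q q (fun p hp => ?_) (fun p hp => ?_) (fun p hp => ?_)
    · have := abs_le.1 (hFh p); linarith
    · rw [trH_eq, hTr]; push_cast; linarith
    · have := abs_le.1 (hFh p); linarith
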